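/- arXiv:0901.0907 — 4 statements merged into one kernel-verified Lean document; each statement's English description precedes it below -/
import Mathlib

section
/- A function φ : 𝔻 → ℂ is analytic with sup_{λ∈𝔻} |φ(λ)| ≤ 1 if and only if there exist a complex Hilbert space H and a linear isometry V : ℂ ⊕ H → ℂ ⊕ H with block decomposition V(c,h) = (Ac + Bh, Cc·1 + Dh), where A ∈ ℂ, B : H → ℂ is a bounded linear functional, C ∈ H (acting as c ↦ cC), and D : H → H is a bounded linear operator, such that for every λ ∈ 𝔻 the operator I_H − λD is invertible and φ(λ) = A + λ B (I_H − λD)^{-1} C. -/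
open Complex Metric

theorem szego_avg (F : ℂ → ℂ) (hF : DifferentiableOn ℂ F (closedBall 0 1)) (a w : ℂ)
    (ha : ‖a‖ < 1) (hw : ‖w‖ < 1) :
    CircleIntegrable (fun z => star (z / (z - a)) * (F z * (z / (z - w)))) 0 1 ∧
    Real.circleAverage (fun z => star (z / (z - a)) * (F z * (z / (z - w)))) 0 1
      = F w / (1 - star a * w) := by
  have hne : ∀ z : ℂ, ‖z‖ ≤ 1 → 1 - star a * z ≠ 0 := by
    intro z hz h
    have h1 : star a * z = 1 := (sub_eq_zero.mp h).symm
    have h2 : ‖star a * z‖ = 1 := by rw [h1]; simp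
    rw [norm_mul, norm_star] at h2
    nlinarith [norm_nonneg a, norm_nonneg z]
  have hd : DifferentiableOn ℂ (fun z => F z / (1 - star a * z)) (closedBall 0 1) := by
    refine hF.div (by fun_prop) ?_
    intro z hz
    exact hne z (by simpa using hz)
  have heq : Set.EqOn (fun z => star (z / (z - a)) * (F z * (z / (z - w))))
      (fun z => (z / (z - w)) • (F z / (1 - star a * z))) (sphere 0 |1|) := by
    intro z hz
    have hz1 : ‖z‖ = 1 := by simpa using hz
    have hzz : z * star z = 1 := by
      have := Complex.mul_conj z
      rw [Complex.normSq_eq_norm_sq, hz1] at this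
      simpa using this
    have hz0 : z ≠ 0 := by rintro rfl; simp at hz1
    have hsz : star z = z⁻¹ := eq_inv_of_mul_eq_one_right hzz
    have hd1 := hne z hz1.le
    have key : star (z / (z - a)) = 1 / (1 - star a * z) := by
      rw [star_div₀, star_sub, hsz]
      have : z⁻¹ - star a = (1 - star a * z) / z := by field_simp
      rw [this]; field_simp
    simp only [key, smul_eq_mul]
    ring
  have hcont : ContinuousOn (fun z => (z / (z - w)) • (F z / (1 - star a * z))) (sphere 0 1) := by
    simp only [smul_eq_mul]
    refine ContinuousOn.mul ?_ (hd.continuousOn.mono sphere_subset_closedBall)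
    refine continuousOn_id.div (by fun_prop) ?_
    intro z hz h
    have hz1 : ‖z‖ = 1 := by simpa using hz
    rw [sub_eq_zero.mp h] at hz1
    linarith
  constructor
  · refine ContinuousOn.circleIntegrable zero_le_one ?_
    exact hcont.congr (by simpa using heq)
  · rw [Real.circleAverage_congr_sphere heq]
    have := DiffContOnCl.circleAverage_smul_div (c := 0) (R := 1) (w := w)
      (f := fun z => F z / (1 - star a * z))
      (by rw [abs_one]; exact (hd.mono closure_ball_subset_closedBall).diffContOnCl) (by simpa using hw)
    simpa using this

theorem pick_closed (g : ℂ → ℂ) (hg : DifferentiableOn ℂ g (closedBall 0 1))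
    (hb : ∀ z ∈ closedBall (0:ℂ) 1, ‖g z‖ ≤ 1) {ι : Type*} (s : Finset ι) (c w : ι → ℂ)
    (hw : ∀ i, ‖w i‖ < 1) :
    0 ≤ (∑ i ∈ s, ∑ j ∈ s, star (c i) * c j *
      ((1 - star (g (w i)) * g (w j)) / (1 - star (w i) * w j))).re := by
  let F : ι → ι → ℂ → ℂ := fun i j z =>
    star (c i) * c j * (1 - star (g (w i)) * g (w j) - 2 * star (g (w i)) * (g z - g (w j)))
  have hF : ∀ i j, DifferentiableOn ℂ (F i j) (closedBall 0 1) := by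
    intro i j; simp only [F]; fun_prop
  let Ψ : ℂ → ℂ := fun z => ∑ i ∈ s, ∑ j ∈ s, star (z / (z - w i)) * (F i j z * (z / (z - w j)))
  have hint : CircleIntegrable Ψ 0 1 := by
    refine CircleIntegrable.fun_sum _ fun i _ => CircleIntegrable.fun_sum _ fun j _ => ?_
    exact (szego_avg _ (hF i j) _ _ (hw i) (hw j)).1
  have havg : Real.circleAverage Ψ 0 1 = ∑ i ∈ s, ∑ j ∈ s, star (c i) * c j *
      ((1 - star (g (w i)) * g (w j)) / (1 - star (w i) * w j)) := by
    simp only [Ψ]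
    rw [Real.circleAverage_fun_sum]
    · refine Finset.sum_congr rfl fun i _ => ?_
      rw [Real.circleAverage_fun_sum]
      · refine Finset.sum_congr rfl fun j _ => ?_
        rw [(szego_avg _ (hF i j) _ _ (hw i) (hw j)).2]
        simp only [F]; ring
      · intro j _
        exact (szego_avg _ (hF i j) _ _ (hw i) (hw j)).1
    · intro i _
      refine CircleIntegrable.fun_sum _ fun j _ => ?_
      exact (szego_avg _ (hF i j) _ _ (hw i) (hw j)).1
  rw [← havg]
  have hre := Complex.reCLM.circleAverage_comp_comm hint
  have : (Real.circleAverage Ψ 0 1).re = Real.circleAverage (Complex.reCLM ∘ Ψ) 0 1 := by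
    rw [hre]; rfl
  rw [this]
  refine Real.circleAverage_nonneg_of_nonneg ?_
  intro z hz
  have hz1 : ‖g z‖ ≤ 1 := hb z (sphere_subset_closedBall (by simpa using hz))
  set f : ℂ := ∑ j ∈ s, c j * (z / (z - w j)) with hf
  set k : ℂ := ∑ j ∈ s, c j * g (w j) * (z / (z - w j)) with hk
  have hΨ : Ψ z = star f * f - star k * k - 2 * (star k * (g z * f - k)) := by
    simp only [Ψ, hf, hk, F, star_sum, Finset.mul_sum, Finset.sum_mul, ← Finset.sum_sub_distrib]
    rw [Finset.sum_comm]
    refine Finset.sum_congr rfl fun i _ => Finset.sum_congr rfl fun j _ => ?_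
    simp only [star_mul']
    ring
  have e1 : ((1 - ‖g z‖^2) * ‖f‖^2 + ‖g z * f - k‖^2) = (Ψ z).re := by
    rw [hΨ]
    simp only [← Complex.normSq_eq_norm_sq, Complex.normSq_apply, Complex.star_def]
    simp
    ring
  show 0 ≤ (Ψ z).re
  rw [← e1]
  have : ‖g z‖^2 ≤ 1 := by nlinarith [norm_nonneg (g z)]
  have := mul_nonneg (sub_nonneg.2 this) (sq_nonneg ‖f‖)
  positivity

theorem pick_open (φ : ℂ → ℂ) (hg : DifferentiableOn ℂ φ (ball 0 1))
    (hb : ∀ z ∈ ball (0:ℂ) 1, ‖φ z‖ ≤ 1) {ι : Type*} (s : Finset ι) (c w : ι → ℂ)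
    (hw : ∀ i, ‖w i‖ < 1) :
    0 ≤ (∑ i ∈ s, ∑ j ∈ s, star (c i) * c j *
      ((1 - star (φ (w i)) * φ (w j)) / (1 - star (w i) * w j))).re := by
  have hlim : ∀ i, Filter.Tendsto (fun r : ℝ => φ (r * w i)) (nhdsWithin 1 (Set.Iio 1))
      (nhds (φ (w i))) := by
    intro i
    have h1 : ContinuousAt φ (w i) :=
      (hg.continuousOn).continuousAt (isOpen_ball.mem_nhds (by simpa using hw i))
    have h2 : Filter.Tendsto (fun r : ℝ => (r : ℂ) * w i) (nhdsWithin 1 (Set.Iio 1))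
        (nhds (w i)) := by
      have : Continuous (fun r : ℝ => (r : ℂ) * w i) := by fun_prop
      have := this.tendsto 1
      simp only [ofReal_one, one_mul] at this
      exact this.mono_left nhdsWithin_le_nhds
    exact h1.tendsto.comp h2
  have hT : Filter.Tendsto (fun r : ℝ => (∑ i ∈ s, ∑ j ∈ s, star (c i) * c j *
      ((1 - star (φ (r * w i)) * φ (r * w j)) / (1 - star (w i) * w j))).re)
      (nhdsWithin 1 (Set.Iio 1)) (nhds (∑ i ∈ s, ∑ j ∈ s, star (c i) * c j *
      ((1 - star (φ (w i)) * φ (w j)) / (1 - star (w i) * w j))).re) := by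
    refine (Complex.continuous_re.tendsto _).comp ?_
    refine tendsto_finsetSum _ fun i _ => tendsto_finsetSum _ fun j _ => ?_
    refine Filter.Tendsto.const_mul _ (Filter.Tendsto.div_const ?_ _)
    exact ((((continuous_star.tendsto _).comp (hlim i)).mul (hlim j))).const_sub 1
  refine ge_of_tendsto hT ?_
  have hm : Set.Ioo (0:ℝ) 1 ∈ nhdsWithin (1:ℝ) (Set.Iio 1) := Ioo_mem_nhdsLT (by norm_num)
  filter_upwards [hm] with r hr
  have hmaps : Set.MapsTo (fun z : ℂ => (r:ℂ) * z) (closedBall 0 1) (ball 0 1) := by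
    intro z hz
    have : ‖z‖ ≤ 1 := by simpa using hz
    simp only [mem_ball_zero_iff, norm_mul, Complex.norm_real, Real.norm_eq_abs, abs_of_pos hr.1]
    nlinarith [hr.1, hr.2]
  refine pick_closed (fun z => φ (r * z)) ?_ ?_ s c w hw
  · exact hg.comp (by fun_prop) hmaps
  · intro z hz; exact hb _ (hmaps hz)

theorem kernel_space (φ : ℂ → ℂ) (hg : DifferentiableOn ℂ φ (ball 0 1))
    (hb : ∀ z ∈ ball (0:ℂ) 1, ‖φ z‖ ≤ 1) :
    ∃ (H : Type) (_ : NormedAddCommGroup H) (_ : InnerProductSpace ℂ H) (_ : CompleteSpace H)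
      (k : ball (0:ℂ) 1 → H),
      (∀ w z, inner ℂ (k w) (k z) = (1 - star (φ w) * φ z) / (1 - star (w:ℂ) * z)) ∧
      ∀ h : H, (∀ w, inner ℂ (k w) h = 0) → h = 0 := by
  let K : Matrix (ball (0:ℂ) 1) (ball (0:ℂ) 1) (ℂ →L[ℂ] ℂ) := fun z w =>
    (star ((1 - star (φ w) * φ z) / (1 - star (w:ℂ) * z))) • ContinuousLinearMap.id ℂ ℂ
  have hherm : K.IsHermitian := by
    ext z w
    refine ext_inner_right ℂ fun v => ?_
    simp only [Matrix.conjTranspose_apply, ContinuousLinearMap.star_eq_adjoint,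
      ContinuousLinearMap.adjoint_inner_left]
    simp [K]
    ring
  have hpos : K.PosSemidef := by
    have htfae : K.PosSemidef ↔ (K.IsHermitian ∧ ∀ (vv : ball (0:ℂ) 1 →₀ ℂ),
        0 ≤ RCLike.re (vv.sum fun x w ↦ vv.sum fun x' w' ↦ inner ℂ (K x' x w) w')) :=
      RKHS.posSemidef_tfae.out 0 2
    refine htfae.2 ⟨hherm, fun vv => ?_⟩
    have := pick_open φ hg hb vv.support (fun i => vv i) (fun i => (i : ℂ))
      (fun i => mem_ball_zero_iff.1 i.2)
    simp only [Finsupp.sum]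
    refine this.trans_eq ?_
    refine congrArg Complex.re ?_
    refine Finset.sum_congr rfl fun i _ => Finset.sum_congr rfl fun j _ => ?_
    simp [K]
    ring
  have : Fact K.PosSemidef := ⟨hpos⟩
  refine ⟨RKHS.OfKernel K, inferInstance, inferInstance, inferInstance,
    fun w => RKHS.kerFun (RKHS.OfKernel K) w 1, ?_, ?_⟩
  · intro w z
    rw [← RKHS.kernel_inner, RKHS.OfKernel.kernel_ofKernel]
    simp [K]
  · intro h hh
    refine RKHS.ext fun x => ?_
    have := hh x
    rw [RKHS.kerFun_inner] at this
    simpa using this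

theorem norm_lc_eq {ι E : Type*} [NormedAddCommGroup E] [InnerProductSpace ℂ E] (u v : ι → E)
    (h : ∀ i j, inner ℂ (u i) (u j) = inner ℂ (v i) (v j)) (c : ι →₀ ℂ) :
    ‖Finsupp.linearCombination ℂ u c‖ = ‖Finsupp.linearCombination ℂ v c‖ := by
  rw [@norm_eq_sqrt_re_inner ℂ, @norm_eq_sqrt_re_inner ℂ]
  congr 2
  simp only [Finsupp.linearCombination_apply, Finsupp.sum, sum_inner, inner_sum, inner_smul_left,
    inner_smul_right, h]

theorem realization_exists (φ : ℂ → ℂ) (hg : DifferentiableOn ℂ φ (ball 0 1))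
    (hb : ∀ z ∈ ball (0:ℂ) 1, ‖φ z‖ ≤ 1) :
    ∃ (H : Type) (_ : NormedAddCommGroup H) (_ : InnerProductSpace ℂ H) (_ : CompleteSpace H)
      (A : ℂ) (B : H →L[ℂ] ℂ) (C : H) (D : H →L[ℂ] H),
      (∀ (c : ℂ) (h : H),
        ‖A * c + B h‖ ^ 2 + ‖c • C + D h‖ ^ 2 = ‖c‖ ^ 2 + ‖h‖ ^ 2) ∧
      ∀ lam ∈ ball (0 : ℂ) 1, ∃ k : H, φ lam = A + lam * B k ∧ k = C + lam • D k := by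
  obtain ⟨H, _, _, _, k, hk, htot⟩ := kernel_space φ hg hb
  refine ⟨H, inferInstance, inferInstance, inferInstance, ?_⟩
  let u : ball (0:ℂ) 1 → WithLp 2 (ℂ × H) := fun w => WithLp.toLp 2 ((1:ℂ), (w:ℂ) • k w)
  let v : ball (0:ℂ) 1 → WithLp 2 (ℂ × H) := fun w => WithLp.toLp 2 (φ w, k w)
  have hne : ∀ w z : ball (0:ℂ) 1, 1 - star (w:ℂ) * z ≠ 0 := by
    intro w z h
    have h1 : star (w:ℂ) * z = 1 := (sub_eq_zero.mp h).symm
    have h2 : ‖star (w:ℂ) * z‖ = 1 := by rw [h1]; simp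
    rw [norm_mul, norm_star] at h2
    have hw : ‖(w:ℂ)‖ < 1 := mem_ball_zero_iff.1 w.2
    have hz : ‖(z:ℂ)‖ < 1 := mem_ball_zero_iff.1 z.2
    nlinarith [norm_nonneg (w:ℂ), norm_nonneg (z:ℂ)]
  have huv : ∀ i j, inner ℂ (v i) (v j) = inner ℂ (u i) (u j) := by
    intro w z
    have := hne w z
    simp only [u, v, WithLp.prod_inner_apply, inner_smul_left, inner_smul_right, hk]
    simp only [RCLike.inner_apply, map_one, Complex.star_def] at this ⊢
    field_simp
    ring
  have hkc : Continuous k := by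
    rw [continuous_iff_continuousAt]
    intro w
    rw [ContinuousAt, tendsto_iff_norm_sub_tendsto_zero]
    have hφc : Continuous (fun z : ball (0:ℂ) 1 => φ z) :=
      continuousOn_iff_continuous_domRestrict.mp hg.continuousOn
    have hsq : Filter.Tendsto (fun z => ‖k z - k w‖ ^ 2) (nhds w) (nhds 0) := by
      have e : (fun z => ‖k z - k w‖ ^ 2) = fun z : ball (0:ℂ) 1 =>
          ((1 - star (φ z) * φ z) / (1 - star (z:ℂ) * z)
          - (1 - star (φ z) * φ w) / (1 - star (z:ℂ) * w)
          - (1 - star (φ w) * φ z) / (1 - star (w:ℂ) * z)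
          + (1 - star (φ w) * φ w) / (1 - star (w:ℂ) * w)).re := by
        funext z
        rw [← hk, ← hk, ← hk, ← hk, @norm_sq_eq_re_inner ℂ]
        simp only [inner_sub_left, inner_sub_right]
        simp
        ring
      have hc : Continuous (fun z => ‖k z - k w‖ ^ 2) := by
        rw [e]
        refine Complex.continuous_re.comp ?_
        refine ((Continuous.sub (Continuous.sub (Continuous.div ?_ ?_ ?_) (Continuous.div ?_ ?_ ?_))
          (Continuous.div ?_ ?_ ?_)).add continuous_const)
        all_goals first
          | fun_prop
          | exact fun z => hne _ _
          | exact continuous_const.sub ((continuous_star.comp hφc).mul hφc)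
          | exact continuous_const.sub ((continuous_star.comp hφc).mul continuous_const)
          | exact continuous_const.sub (continuous_const.mul hφc)
      simpa using hc.tendsto w
    have := hsq.sqrt
    simpa using this
  have hdense : DenseRange (Finsupp.linearCombination ℂ u) := by
    have : (LinearMap.range (Finsupp.linearCombination ℂ u)).topologicalClosure = ⊤ := by
      rw [Submodule.topologicalClosure_eq_top_iff, Submodule.eq_bot_iff]
      intro x hx
      have hx' : ∀ w, inner ℂ (u w) x = 0 := by
        intro w
        refine (Submodule.mem_orthogonal _ _).1 hx _ ⟨Finsupp.single w 1, by simp⟩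
      have h0 : x.fst = 0 := by
        have := hx' ⟨0, by simp⟩
        simpa [u, WithLp.prod_inner_apply] using this
      have h1 : ∀ w : ball (0:ℂ) 1, (w:ℂ) ≠ 0 → inner ℂ (k w) x.snd = 0 := by
        intro w hw
        have := hx' w
        simpa [u, WithLp.prod_inner_apply, inner_smul_left, h0, hw] using this
      have h2 : x.snd = 0 := by
        refine htot _ fun w => ?_
        by_cases hw : (w:ℂ) = 0
        · let γ : ℕ → ball (0:ℂ) 1 := fun n => ⟨((1 / ((n:ℝ) + 2) : ℝ) : ℂ), by
            simp only [mem_ball_zero_iff, Complex.norm_real, Real.norm_eq_abs]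
            rw [abs_of_pos (by positivity), div_lt_one (by positivity)]
            linarith [(Nat.cast_nonneg n : (0:ℝ) ≤ n)]⟩
          have hγ : Filter.Tendsto γ Filter.atTop (nhds w) := by
            rw [tendsto_subtype_rng, hw]
            have : Filter.Tendsto (fun n : ℕ => (1 / ((n:ℝ) + 2) : ℝ)) Filter.atTop (nhds 0) :=
              tendsto_const_nhds.div_atTop
                (Filter.tendsto_atTop_add_const_right _ _ tendsto_natCast_atTop_atTop)
            exact (Complex.continuous_ofReal.tendsto' 0 0 (by simp)).comp this
          have hc : Continuous (fun z => inner ℂ (k z) x.snd) := by fun_prop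
          have hl := (hc.tendsto w).comp hγ
          refine tendsto_nhds_unique hl ?_
          refine tendsto_const_nhds.congr fun n => ?_
          refine (h1 (γ n) ?_).symm
          simp only [γ]
          exact_mod_cast (by positivity : (1 / ((n:ℝ) + 2) : ℝ) ≠ 0)
        · exact h1 w hw
      exact (WithLp.ofLp_injective 2) (Prod.ext h0 h2)
    have h3 := congrArg (fun S : Submodule ℂ (WithLp 2 (ℂ × H)) => (S : Set (WithLp 2 (ℂ × H)))) this
    simp only [Submodule.topologicalClosure_coe, Submodule.top_coe] at h3
    exact dense_iff_closure_eq.2 (by rwa [LinearMap.coe_range] at h3)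
  let f := Finsupp.linearCombination ℂ v
  let e := Finsupp.linearCombination ℂ u
  have hnorm : ∀ x, ‖f x‖ = ‖e x‖ := norm_lc_eq v u huv
  let V : WithLp 2 (ℂ × H) →L[ℂ] WithLp 2 (ℂ × H) := f.extendOfNorm e
  have hVe : ∀ x, V (e x) = f x :=
    LinearMap.extendOfNorm_eq hdense ⟨1, fun x => by rw [hnorm, one_mul]⟩
  have hViso : ∀ x, ‖V x‖ = ‖x‖ := by
    intro x
    refine hdense.induction (P := fun x => ‖V x‖ = ‖x‖) ?_
      (isClosed_eq (by fun_prop) (by fun_prop)) x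
    rintro _ ⟨y, rfl⟩
    exact (congrArg norm (hVe y)).trans (hnorm y)
  have hVu : ∀ w, V (u w) = v w := by
    intro w
    have := hVe (Finsupp.single w 1)
    simpa [e, f] using this
  let ε := WithLp.prodContinuousLinearEquiv 2 ℂ ℂ H
  let W : (ℂ × H) →L[ℂ] (ℂ × H) := (ε : _ →L[ℂ] _) ∘L V ∘L (ε.symm : _ →L[ℂ] _)
  have hW : ∀ p, W p = (V (WithLp.toLp 2 p)).ofLp := fun p => rfl
  have hdec : ∀ (c : ℂ) (h : H), W (c, h) = c • W (1, 0) + W (0, h) := by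
    intro c h
    rw [← map_smul, ← map_add]
    simp
  have hiso : ∀ p : ℂ × H, ‖(W p).1‖ ^ 2 + ‖(W p).2‖ ^ 2 = ‖p.1‖ ^ 2 + ‖p.2‖ ^ 2 := by
    intro p
    have h1 := hViso (WithLp.toLp 2 p)
    have h2 := WithLp.prod_norm_sq_eq_of_L2 (V (WithLp.toLp 2 p))
    have h3 := WithLp.prod_norm_sq_eq_of_L2 (WithLp.toLp 2 p)
    rw [h1, h3] at h2
    exact h2.symm
  refine ⟨(W (1, 0)).1, ContinuousLinearMap.fst ℂ ℂ H ∘L W ∘L ContinuousLinearMap.inr ℂ ℂ H,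
    (W (1, 0)).2, ContinuousLinearMap.snd ℂ ℂ H ∘L W ∘L ContinuousLinearMap.inr ℂ ℂ H, ?_, ?_⟩
  · intro c h
    have := hiso (c, h)
    rw [hdec] at this
    simpa [mul_comm] using this
  · intro lam hlam
    refine ⟨k ⟨lam, hlam⟩, ?_⟩
    have h1 : W (1, lam • k ⟨lam, hlam⟩) = (φ lam, k ⟨lam, hlam⟩) := by
      rw [hW]; exact congrArg WithLp.ofLp (hVu ⟨lam, hlam⟩)
    have h2 : W (0, lam • k ⟨lam, hlam⟩) = lam • W (0, k ⟨lam, hlam⟩) := by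
      rw [← map_smul]; simp
    rw [hdec, h2, one_smul] at h1
    exact ⟨by simpa using (congrArg Prod.fst h1).symm, by simpa using (congrArg Prod.snd h1).symm⟩

theorem D_unit {H : Type} [NormedAddCommGroup H] [InnerProductSpace ℂ H] [CompleteSpace H]
    (A : ℂ) (B : H →L[ℂ] ℂ) (C : H) (D : H →L[ℂ] H)
    (hV : ∀ (c : ℂ) (h : H),
        ‖A * c + B h‖ ^ 2 + ‖c • C + D h‖ ^ 2 = ‖c‖ ^ 2 + ‖h‖ ^ 2) (lam : ℂ)
    (hl : lam ∈ ball (0:ℂ) 1) : IsUnit (1 - lam • D) := by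
  have hD : ‖D‖ ≤ 1 := by
    refine D.opNorm_le_bound zero_le_one fun h => ?_
    have := hV 0 h
    simp only [mul_zero, zero_add, zero_smul, norm_zero] at this
    rw [one_mul]
    refine le_of_sq_le_sq ?_ (norm_nonneg _)
    nlinarith [sq_nonneg ‖B h‖]
  refine isUnit_one_sub_of_norm_lt_one ?_
  rw [norm_smul]
  have : ‖lam‖ < 1 := by simpa using hl
  nlinarith [norm_nonneg lam, norm_nonneg D]

/-- **Realization formula on the disk.** A function `φ : 𝔻 → ℂ` is analytic with
`sup_{λ ∈ 𝔻} |φ(λ)| ≤ 1` if and only if there are a complex Hilbert space `H` and an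
isometry `V : ℂ ⊕ H → ℂ ⊕ H` with block decomposition `V(c, h) = (A c + B h, c • C + D h)`
such that for every `λ ∈ 𝔻` the operator `I_H - λ D` is invertible and
`φ(λ) = A + λ B (I_H - λ D)⁻¹ C`. -/
theorem realization_formula_disk (φ : ℂ → ℂ) :
    (DifferentiableOn ℂ φ (ball (0 : ℂ) 1) ∧ ∀ lam ∈ ball (0 : ℂ) 1, ‖φ lam‖ ≤ 1) ↔
    ∃ (H : Type) (_ : NormedAddCommGroup H) (_ : InnerProductSpace ℂ H) (_ : CompleteSpace H)
      (A : ℂ) (B : H →L[ℂ] ℂ) (C : H) (D : H →L[ℂ] H),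
      -- `V(c, h) = (A * c + B h, c • C + D h)` is an isometry of `ℂ ⊕ H`
      (∀ (c : ℂ) (h : H),
        ‖A * c + B h‖ ^ 2 + ‖c • C + D h‖ ^ 2 = ‖c‖ ^ 2 + ‖h‖ ^ 2) ∧
      ∀ lam ∈ ball (0 : ℂ) 1,
        IsUnit (1 - lam • D) ∧
        φ lam = A + lam * B ((Ring.inverse (1 - lam • D)) C) := by
  constructor
  · rintro ⟨hd, hb⟩
    obtain ⟨H, i1, i2, i3, A, B, C, D, hV, hk⟩ := realization_exists φ hd hb
    refine ⟨H, i1, i2, i3, A, B, C, D, hV, fun lam hl => ?_⟩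
    have hu := D_unit A B C D hV lam hl
    refine ⟨hu, ?_⟩
    obtain ⟨k, h1, h2⟩ := hk lam hl
    have h3 : C = (1 - lam • D) k := by
      simp only [sub_apply, one_apply_eq_self,
        smul_apply]
      exact eq_sub_of_add_eq h2.symm
    have h4 : Ring.inverse (1 - lam • D) C = k := by
      rw [h3, ← mul_apply_eq_comp, Ring.inverse_mul_cancel _ hu]
      rfl
    rw [h4, h1]
  · rintro ⟨H, _, _, _, A, B, C, D, hV, hk⟩
    constructor
    · have : DifferentiableOn ℂ (fun lam => A + lam * B ((Ring.inverse (1 - lam • D)) C))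
          (ball (0:ℂ) 1) := by
        intro lam hl
        have hu := (hk lam hl).1
        have h1 : DifferentiableAt ℂ (fun l : ℂ => Ring.inverse (1 - l • D)) lam := by
          have h2 : DifferentiableAt ℂ (Ring.inverse : (H →L[ℂ] H) → _) (1 - lam • D) := by
            exact differentiableAt_inverse hu
          exact DifferentiableAt.comp (f := fun l : ℂ => 1 - l • D) lam h2 (by fun_prop)
        have h3 : DifferentiableAt ℂ (fun l : ℂ => (Ring.inverse (1 - l • D)) C) lam :=
          h1.clm_apply (differentiableAt_const C)
        have h4 : DifferentiableAt ℂ (fun l : ℂ => B ((Ring.inverse (1 - l • D)) C)) lam :=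
          B.differentiableAt.comp lam h3
        exact ((differentiableAt_id.mul h4).const_add A).differentiableWithinAt
      exact this.congr fun lam hl => (hk lam hl).2
    · intro lam hl
      obtain ⟨hu, he⟩ := hk lam hl
      set h := (Ring.inverse (1 - lam • D)) C with hh
      have h1 : (1 - lam • D) h = C := by
        rw [hh, ← mul_apply_eq_comp, Ring.mul_inverse_cancel _ hu]
        rfl
      have h2 : C + lam • D h = h := by
        rw [← h1]; simp
      have h3 := hV 1 (lam • h)
      simp only [mul_one, one_smul, map_smul, smul_eq_mul, norm_one, norm_smul] at h3
      rw [h2, ← he] at h3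
      have hl1 : ‖lam‖ < 1 := by simpa using hl
      have h4 : (‖lam‖ * ‖h‖) ^ 2 ≤ ‖h‖ ^ 2 := by
        have : ‖lam‖ * ‖h‖ ≤ ‖h‖ := by nlinarith [norm_nonneg h]
        exact pow_le_pow_left₀ (by positivity) this 2
      nlinarith [norm_nonneg (φ lam)]
end

section
/- A function φ : 𝔻² → ℂ is analytic with sup_{λ∈𝔻²} |φ(λ)| ≤ 1 if and only if there exist complex Hilbert spaces H₁ and H₂ and a linear isometry V : ℂ ⊕ H → ℂ ⊕ H, where H := H₁ ⊕ H₂, with block decomposition V(c,h) = (Ac + Bh, cC + Dh) (A ∈ ℂ, B : H → ℂ bounded linear, C ∈ H, D : H → H bounded linear), such that, writing E_λ : H → H for the operator λ¹ I_{H₁} ⊕ λ² I_{H₂}, for every λ = (λ¹,λ²) ∈ 𝔻² the operator I_H − D E_λ is invertible and φ(λ) = A + B E_λ (I_H − D E_λ)^{-1} C. -/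
open Complex Metric

/-- The open bidisk in `ℂ × ℂ`. -/
def Bidisk : Set (ℂ × ℂ) := {lam : ℂ × ℂ | ‖lam.1‖ < 1 ∧ ‖lam.2‖ < 1}

/-- The operator `E_λ = λ¹ I_{H₁} ⊕ λ² I_{H₂}` on the Hilbert-space direct sum
`H = H₁ ⊕ H₂` (realized as `WithLp 2 (H₁ × H₂)`). -/
noncomputable def diagBlockOp (H₁ H₂ : Type*) [NormedAddCommGroup H₁]
    [InnerProductSpace ℂ H₁] [NormedAddCommGroup H₂] [InnerProductSpace ℂ H₂]
    (a b : ℂ) : WithLp 2 (H₁ × H₂) →L[ℂ] WithLp 2 (H₁ × H₂) :=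
  ((WithLp.prodContinuousLinearEquiv 2 ℂ H₁ H₂).symm :
      H₁ × H₂ →L[ℂ] WithLp 2 (H₁ × H₂)).comp
    (((a • ContinuousLinearMap.id ℂ H₁).prodMap (b • ContinuousLinearMap.id ℂ H₂)).comp
      ((WithLp.prodContinuousLinearEquiv 2 ℂ H₁ H₂) :
        WithLp 2 (H₁ × H₂) →L[ℂ] H₁ × H₂))

section Approx

open Filter Topology

lemma tail_bound (a : ℕ → ℂ) (ha : ∀ i, ‖a i‖ ≤ 1) (t s : ℂ) (ht : ‖t‖ < 1)
    (h : HasSum (fun i => a i * t ^ i) s) (N : ℕ) :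
    ‖s - ∑ i ∈ Finset.range N, a i * t ^ i‖ ≤ ‖t‖ ^ N / (1 - ‖t‖) := by
  have h1 := (hasSum_nat_add_iff' N).2 h
  have h2 : HasSum (fun i : ℕ => ‖t‖ ^ N * ‖t‖ ^ i) (‖t‖ ^ N * (1 - ‖t‖)⁻¹) :=
    (hasSum_geometric_of_lt_one (norm_nonneg t) ht).mul_left _
  have h3 : ∀ i, ‖a (i + N) * t ^ (i + N)‖ ≤ ‖t‖ ^ N * ‖t‖ ^ i := by
    intro i
    rw [norm_mul, norm_pow, pow_add, mul_comm (‖t‖ ^ i)]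
    exact mul_le_of_le_one_left (by positivity) (ha _)
  rw [← h1.tsum_eq, div_eq_mul_inv]
  exact tsum_of_norm_bounded h2 h3

lemma taylor_coeff (f : ℂ → ℂ) (hf : DifferentiableOn ℂ f (ball 0 1))
    (hb : ∀ z ∈ ball (0 : ℂ) 1, ‖f z‖ ≤ 1) :
    ∃ a : ℕ → ℂ, (∀ i, ‖a i‖ ≤ 1) ∧
      ∀ z ∈ ball (0 : ℂ) 1, HasSum (fun i => a i * z ^ i) (f z) := by
  refine ⟨fun i => (i.factorial : ℂ)⁻¹ * iteratedDeriv i f 0, ?_, ?_⟩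
  · intro i
    have key : ∀ R : ℝ, 0 < R → R < 1 →
        ‖(i.factorial : ℂ)⁻¹ * iteratedDeriv i f 0‖ * R ^ i ≤ 1 := by
      intro R h0 h1
      have hd : DiffContOnCl ℂ f (ball 0 R) :=
        (hf.mono (closure_ball_subset_closedBall.trans (closedBall_subset_ball h1))).diffContOnCl
      have := norm_iteratedDeriv_le_of_forall_mem_sphere_norm_le i h0 hd (C := 1)
        (fun z hz => hb z (sphere_subset_closedBall.trans (closedBall_subset_ball h1) hz))
      have hR : 0 < R ^ i := by positivity
      have hfac : (0 : ℝ) < i.factorial := by positivity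
      rw [norm_mul, norm_inv, Complex.norm_natCast]
      rw [mul_one, le_div_iff₀ hR] at this
      rw [mul_assoc, inv_mul_le_iff₀ hfac, mul_one]
      exact this
    have hlim : Tendsto (fun R : ℝ => ‖(i.factorial : ℂ)⁻¹ * iteratedDeriv i f 0‖ * R ^ i)
        (𝓝[<] 1) (𝓝 (‖(i.factorial : ℂ)⁻¹ * iteratedDeriv i f 0‖ * 1 ^ i)) :=
      Tendsto.mono_left (Continuous.tendsto (by fun_prop) 1) nhdsWithin_le_nhds
    have := le_of_tendsto hlim (b := 1) (by
      filter_upwards [Ioo_mem_nhdsLT (show (0 : ℝ) < 1 by norm_num)] with R hR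
      exact key R hR.1 hR.2)
    simpa using this
  · intro z hz
    have := Complex.hasSum_taylorSeries_on_ball hf hz
    have e : (fun n : ℕ => (n.factorial : ℂ)⁻¹ * iteratedDeriv n f 0 * z ^ n) =
        fun n : ℕ => (n.factorial : ℂ)⁻¹ • (z - 0) ^ n • iteratedDeriv n f 0 := by
      funext n
      rw [sub_zero, smul_eq_mul, smul_eq_mul]
      ring
    rw [e]
    exact this

lemma mem_bidisk {z w : ℂ} (hz : z ∈ ball (0 : ℂ) 1) (hw : w ∈ ball (0 : ℂ) 1) :
    (z, w) ∈ Bidisk := ⟨mem_ball_zero_iff.1 hz, mem_ball_zero_iff.1 hw⟩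

lemma double_coeff (φ : ℂ × ℂ → ℂ) (hd : DifferentiableOn ℂ φ Bidisk)
    (hb : ∀ z ∈ Bidisk, ‖φ z‖ ≤ 1) :
    ∃ (a : ℕ → ℂ → ℂ) (c : ℕ → ℕ → ℂ),
      (∀ i, ∀ w ∈ ball (0 : ℂ) 1, ‖a i w‖ ≤ 1) ∧ (∀ i j, ‖c i j‖ ≤ 1) ∧
      (∀ z ∈ ball (0 : ℂ) 1, ∀ w ∈ ball (0 : ℂ) 1, HasSum (fun i => a i w * z ^ i) (φ (z, w))) ∧
      (∀ i, ∀ w ∈ ball (0 : ℂ) 1, HasSum (fun j => c i j * w ^ j) (a i w)) := by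
  have h1 : ∀ w : ℂ, ∃ a : ℕ → ℂ, w ∈ ball (0 : ℂ) 1 → ((∀ i, ‖a i‖ ≤ 1) ∧
      ∀ z ∈ ball (0 : ℂ) 1, HasSum (fun i => a i * z ^ i) (φ (z, w))) := by
    intro w
    by_cases hw : w ∈ ball (0 : ℂ) 1
    · obtain ⟨a, ha⟩ := taylor_coeff (fun z => φ (z, w))
        (hd.comp (f := fun z : ℂ => (z, w)) (by fun_prop) (fun z hz => mem_bidisk hz hw))
        (fun z hz => hb _ (mem_bidisk hz hw))
      exact ⟨a, fun _ => ha⟩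
    · exact ⟨0, fun h => absurd h hw⟩
  choose a ha using h1
  have hslice : ∀ z ∈ ball (0 : ℂ) 1, DifferentiableOn ℂ (fun w => φ (z, w)) (ball 0 1) := by
    intro z hz
    exact hd.comp (f := fun w : ℂ => (z, w)) (by fun_prop) (fun w hw => mem_bidisk hz hw)
  have hdiff : ∀ i, DifferentiableOn ℂ (fun w => a w i) (ball 0 1) := by
    intro i
    induction i using Nat.strong_induction_on with
    | _ i ih =>
    set t : ℕ → ℂ := fun n => ((n : ℂ) + 2)⁻¹ with ht
    have htn : ∀ n, ‖t n‖ = ((n : ℝ) + 2)⁻¹ := by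
      intro n
      have : ((n : ℂ) + 2) = ((n + 2 : ℕ) : ℂ) := by push_cast; ring
      rw [ht]; simp only; rw [norm_inv, this, Complex.norm_natCast]; push_cast; ring
    have htpos : ∀ n, 0 < ‖t n‖ := by intro n; rw [htn]; positivity
    have htlt : ∀ n, ‖t n‖ < 1 := by
      intro n; rw [htn]; apply inv_lt_one_of_one_lt₀; have : (0:ℝ) ≤ n := n.cast_nonneg; linarith
    have htne : ∀ n, t n ≠ 0 := fun n => norm_pos_iff.1 (htpos n)
    have hunif : TendstoUniformlyOn
        (fun n w => (φ (t n, w) - ∑ j ∈ Finset.range i, a w j * t n ^ j) / t n ^ i)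
        (fun w => a w i) atTop (ball 0 1) := by
      rw [Metric.tendstoUniformlyOn_iff]
      intro ε hε
      have hlim := tendsto_one_div_add_atTop_nhds_zero_nat (𝕜 := ℝ)
      filter_upwards [hlim.eventually (gt_mem_nhds hε)] with n hn w hw
      refine lt_of_le_of_lt ?_ hn
      have hs := (ha w hw).2 (t n) (mem_ball_zero_iff.2 (htlt n))
      have hT := tail_bound _ (ha w hw).1 (t n) _ (htlt n) hs (i + 1)
      have hti : t n ^ i ≠ 0 := pow_ne_zero _ (htne n)
      have e1 : (φ (t n, w) - ∑ j ∈ Finset.range i, a w j * t n ^ j) / t n ^ i - a w i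
          = (φ (t n, w) - ∑ j ∈ Finset.range (i + 1), a w j * t n ^ j) / t n ^ i := by
        rw [Finset.sum_range_succ]; field_simp; ring
      rw [dist_comm, dist_eq_norm, e1, norm_div, norm_pow]
      have hpi : 0 < ‖t n‖ ^ i := pow_pos (htpos n) i
      rw [div_le_iff₀ hpi]
      refine hT.trans (le_of_eq ?_)
      have h1 : ‖t n‖ / (1 - ‖t n‖) = 1 / ((n : ℝ) + 1) := by
        rw [htn]
        have hn0 : (0 : ℝ) ≤ n := n.cast_nonneg
        have : (n : ℝ) + 2 ≠ 0 := by positivity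
        have h3 : (n : ℝ) + 1 ≠ 0 := by positivity
        have h4 : (1 : ℝ) - ((n : ℝ) + 2)⁻¹ = ((n : ℝ) + 1) * ((n : ℝ) + 2)⁻¹ := by
          field_simp; ring
        rw [h4]; field_simp
      rw [← h1, pow_succ]; ring
    refine hunif.tendstoLocallyUniformlyOn.differentiableOn (Eventually.of_forall fun n => ?_)
      isOpen_ball
    refine DifferentiableOn.div_const (DifferentiableOn.sub (hslice _ (mem_ball_zero_iff.2 (htlt n)))
      ?_) _
    refine DifferentiableOn.fun_sum fun j hj => ?_
    exact (ih j (Finset.mem_range.1 hj)).mul_const _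
  have h2 := fun i => taylor_coeff (fun w => a w i) (hdiff i) (fun w hw => (ha w hw).1 i)
  choose c hc using h2
  exact ⟨fun i w => a w i, c, fun i w hw => (ha w hw).1 i, fun i j => (hc i).1 j,
    fun z hz w hw => (ha w hw).2 z hz, fun i w hw => (hc i).2 w hw⟩

/-- A polynomial in two variables, in coordinates. -/
noncomputable def polyEval (N : ℕ) (c : ℕ → ℕ → ℂ) (z : ℂ × ℂ) : ℂ :=
  ∑ i ∈ Finset.range N, ∑ j ∈ Finset.range N, c i j * (z.1 ^ i * z.2 ^ j)

lemma approx_dilate (φ : ℂ × ℂ → ℂ) (hd : DifferentiableOn ℂ φ Bidisk)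
    (hb : ∀ z ∈ Bidisk, ‖φ z‖ ≤ 1) (r : ℝ) (hr0 : 0 < r) (hr1 : r < 1) (ε : ℝ) (hε : 0 < ε) :
    ∃ (N : ℕ) (c : ℕ → ℕ → ℂ), ∀ z : ℂ × ℂ, ‖z.1‖ ≤ 1 → ‖z.2‖ ≤ 1 →
      ‖polyEval N c z‖ ≤ 1 ∧ ‖polyEval N c z - φ (r * z.1, r * z.2)‖ ≤ 2 * ε := by
  obtain ⟨a, c, ha, hc, hsa, hsc⟩ := double_coeff φ hd hb
  have h1r : 0 < 1 - r := by linarith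
  have hlim : Tendsto (fun N : ℕ => r ^ N * (1 / (1 - r) + 1 / (1 - r) * (1 / (1 - r)))) atTop
      (𝓝 (0 * (1 / (1 - r) + 1 / (1 - r) * (1 / (1 - r))))) :=
    (tendsto_pow_atTop_nhds_zero_of_lt_one hr0.le hr1).mul_const _
  rw [zero_mul] at hlim
  obtain ⟨N, hN⟩ := (hlim.eventually (gt_mem_nhds hε)).exists
  have key : ∀ z : ℂ × ℂ, ‖z.1‖ ≤ 1 → ‖z.2‖ ≤ 1 →
      ‖polyEval N c (r * z.1, r * z.2) - φ (r * z.1, r * z.2)‖ ≤ ε := by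
    intro z hz1 hz2
    have nb : ∀ x : ℂ, ‖x‖ ≤ 1 → ‖(r : ℂ) * x‖ ≤ r := by
      intro x hx
      rw [norm_mul, Complex.norm_real, Real.norm_of_nonneg hr0.le]
      exact mul_le_of_le_one_right hr0.le hx
    set x := (r : ℂ) * z.1 with hx
    set y := (r : ℂ) * z.2 with hy
    have hxr : ‖x‖ ≤ r := nb _ hz1
    have hyr : ‖y‖ ≤ r := nb _ hz2
    have hxb : x ∈ ball (0 : ℂ) 1 := mem_ball_zero_iff.2 (by linarith)
    have hyb : y ∈ ball (0 : ℂ) 1 := mem_ball_zero_iff.2 (by linarith)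
    have mono : ∀ t : ℝ, 0 ≤ t → t ≤ r → t ^ N / (1 - t) ≤ r ^ N * (1 / (1 - r)) := by
      intro t ht0 ht
      rw [mul_one_div]
      gcongr
    have T1 := (tail_bound _ (fun i => ha i y hyb) x _ (by linarith) (hsa x hxb y hyb) N).trans
      (mono _ (norm_nonneg _) hxr)
    have T2 : ∀ i, ‖a i y - ∑ j ∈ Finset.range N, c i j * y ^ j‖ ≤ r ^ N * (1 / (1 - r)) :=
      fun i => (tail_bound _ (hc i) y _ (by linarith) (hsc i y hyb) N).trans
        (mono _ (norm_nonneg _) hyr)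
    have e : φ (x, y) - polyEval N c (x, y) =
        (φ (x, y) - ∑ i ∈ Finset.range N, a i y * x ^ i) +
        ∑ i ∈ Finset.range N, (a i y - ∑ j ∈ Finset.range N, c i j * y ^ j) * x ^ i := by
      simp only [sub_mul, Finset.sum_sub_distrib, polyEval, Finset.sum_mul]
      have : ∀ i j, c i j * (x ^ i * y ^ j) = c i j * y ^ j * x ^ i := by intros; ring
      simp only [this]; ring
    rw [norm_sub_rev, e]
    refine (norm_add_le _ _).trans ?_
    have T3 : ‖∑ i ∈ Finset.range N, (a i y - ∑ j ∈ Finset.range N, c i j * y ^ j) * x ^ i‖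
        ≤ r ^ N * (1 / (1 - r)) * (1 / (1 - r)) := by
      calc _ ≤ ∑ i ∈ Finset.range N, (r ^ N * (1 / (1 - r))) * r ^ i := by
            refine norm_sum_le_of_le _ fun i _ => ?_
            rw [norm_mul, norm_pow]
            gcongr
            exact T2 i
        _ ≤ _ := by
            rw [← Finset.mul_sum]
            gcongr
            rw [one_div, ← tsum_geometric_of_lt_one hr0.le hr1]
            exact (summable_geometric_of_lt_one hr0.le hr1).sum_le_tsum _
              (fun i _ => by positivity)
    calc _ ≤ r ^ N * (1 / (1 - r)) + r ^ N * (1 / (1 - r)) * (1 / (1 - r)) := add_le_add T1 T3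
      _ = r ^ N * (1 / (1 - r) + 1 / (1 - r) * (1 / (1 - r))) := by ring
      _ ≤ ε := hN.le
  refine ⟨N, fun i j => (1 + ε : ℂ)⁻¹ * (c i j * ((r : ℂ) ^ i * (r : ℂ) ^ j)), ?_⟩
  intro z hz1 hz2
  have e2 : polyEval N (fun i j => (1 + ε : ℂ)⁻¹ * (c i j * ((r : ℂ) ^ i * (r : ℂ) ^ j))) z
      = (1 + ε : ℂ)⁻¹ * polyEval N c (r * z.1, r * z.2) := by
    simp only [polyEval, Finset.mul_sum, mul_pow]
    refine Finset.sum_congr rfl fun i _ => Finset.sum_congr rfl fun j _ => by ring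
  have hmem : ((r : ℂ) * z.1, (r : ℂ) * z.2) ∈ Bidisk := by
    constructor <;> simp only [norm_mul, Complex.norm_real, Real.norm_of_nonneg hr0.le] <;> nlinarith
  have hφ := hb _ hmem
  have hk := key z hz1 hz2
  set S := polyEval N c (r * z.1, r * z.2) with hS
  set f := φ (r * z.1, r * z.2) with hf
  have hSb : ‖S‖ ≤ 1 + ε := by
    calc ‖S‖ = ‖f + (S - f)‖ := by congr 1; ring
      _ ≤ ‖f‖ + ‖S - f‖ := norm_add_le _ _
      _ ≤ _ := add_le_add hφ hk
  have hcast : (1 + ε : ℂ) = ((1 + ε : ℝ) : ℂ) := by push_cast; ring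
  have hpos : 0 < 1 + ε := by linarith
  have hP : ‖(1 + ε : ℂ)⁻¹ * S‖ ≤ 1 := by
    rw [norm_mul, norm_inv, hcast, Complex.norm_real, Real.norm_of_nonneg hpos.le,
      inv_mul_le_iff₀ hpos, mul_one]
    exact hSb
  rw [e2]
  refine ⟨hP, ?_⟩
  have hne : (1 + ε : ℂ) ≠ 0 := by rw [hcast]; exact_mod_cast hpos.ne'
  have e3 : (1 + ε : ℂ)⁻¹ * S - f = (S - f) - ε * ((1 + ε : ℂ)⁻¹ * S) := by
    field_simp; ring
  rw [e3]
  calc _ ≤ ‖S - f‖ + ‖(ε : ℂ) * ((1 + ε : ℂ)⁻¹ * S)‖ := norm_sub_le _ _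
    _ ≤ ε + ε * 1 := by
        gcongr
        rw [norm_mul, Complex.norm_real, Real.norm_of_nonneg hε.le]
        gcongr
    _ = 2 * ε := by ring

lemma approx_poly (φ : ℂ × ℂ → ℂ) (hd : DifferentiableOn ℂ φ Bidisk)
    (hb : ∀ z ∈ Bidisk, ‖φ z‖ ≤ 1) :
    ∃ (N : ℕ → ℕ) (c : ℕ → ℕ → ℕ → ℂ),
      (∀ k, ∀ z : ℂ × ℂ, ‖z.1‖ ≤ 1 → ‖z.2‖ ≤ 1 → ‖polyEval (N k) (c k) z‖ ≤ 1) ∧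
      ∀ w ∈ Bidisk, Tendsto (fun k => polyEval (N k) (c k) w) atTop (𝓝 (φ w)) := by
  have h := fun k : ℕ => approx_dilate φ hd hb (1 - 1 / ((k : ℝ) + 2))
    (by
      have : (0 : ℝ) ≤ k := k.cast_nonneg
      rw [sub_pos, div_lt_one (by positivity)]; linarith)
    (by have : (0 : ℝ) < 1 / ((k : ℝ) + 2) := by positivity
        linarith)
    (1 / ((k : ℝ) + 1)) (by positivity)
  choose N c h using h
  refine ⟨N, c, fun k z h1 h2 => (h k z h1 h2).1, fun w hw => ?_⟩
  have hopen : IsOpen Bidisk := by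
    exact (isOpen_lt (f := fun z : ℂ × ℂ => ‖z.1‖) (g := fun _ => 1) (by fun_prop)
      (by fun_prop)).inter (isOpen_lt (f := fun z : ℂ × ℂ => ‖z.2‖) (g := fun _ => 1)
      (by fun_prop) (by fun_prop))
  have hcont : ContinuousAt φ w := (hd.differentiableAt (hopen.mem_nhds hw)).continuousAt
  have l1 := tendsto_one_div_add_atTop_nhds_zero_nat (𝕜 := ℝ)
  have l2 : Tendsto (fun k : ℕ => 1 / ((k : ℝ) + 2)) atTop (𝓝 0) := by
    have := l1.comp (tendsto_add_atTop_nat 1)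
    refine this.congr fun k => ?_
    simp only [Function.comp]; push_cast; ring_nf
  have l3 : Tendsto (fun k : ℕ => ((((1 - 1 / ((k : ℝ) + 2) : ℝ)) : ℂ) * w.1,
      (((1 - 1 / ((k : ℝ) + 2) : ℝ)) : ℂ) * w.2)) atTop (𝓝 w) := by
    have l4 : Tendsto (fun k : ℕ => ((1 - 1 / ((k : ℝ) + 2) : ℝ) : ℂ)) atTop (𝓝 1) := by
      have := (Complex.continuous_ofReal.tendsto _).comp (l2.const_sub 1)
      rw [sub_zero, Complex.ofReal_one] at this
      exact this
    have := (l4.mul_const w.1).prodMk_nhds (l4.mul_const w.2)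
    simpa using this
  have l5 := hcont.tendsto.comp l3
  have l6 : Tendsto (fun k => polyEval (N k) (c k) w - φ ((((1 - 1 / ((k : ℝ) + 2) : ℝ)) : ℂ) * w.1,
      (((1 - 1 / ((k : ℝ) + 2) : ℝ)) : ℂ) * w.2)) atTop (𝓝 0) := by
    refine squeeze_zero_norm (fun k => (h k w hw.1.le hw.2.le).2) ?_
    simpa using l1.const_mul 2
  have := l6.add l5
  simpa using this

end Approx

section Core

set_option linter.unusedSectionVars false

open scoped ComplexConjugate InnerProductSpace

variable {K : Type*} [NormedAddCommGroup K] [InnerProductSpace ℂ K] [CompleteSpace K]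

lemma wandering (V : K →L[ℂ] K) (hV : ∀ x y, ⟪V x, V y⟫_ℂ = ⟪x, y⟫_ℂ)
    (S : Submodule ℂ K) [S.HasOrthogonalProjection] (hS : ∀ s ∈ S, V s ∈ S)
    (κ₁ κ₂ : K) (c₁ c₂ : ℂ)
    (h₁ : ∀ s ∈ S, ⟪κ₁, V s⟫_ℂ = conj c₁ * ⟪κ₁, s⟫_ℂ)
    (h₂ : ∀ s ∈ S, ⟪κ₂, V s⟫_ℂ = conj c₂ * ⟪κ₂, s⟫_ℂ) :
    ⟪S.starProjection κ₁ - c₁ • V (S.starProjection κ₁),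
      S.starProjection κ₂ - c₂ • V (S.starProjection κ₂)⟫_ℂ =
      (1 - conj c₁ * c₂) * ⟪S.starProjection κ₁, S.starProjection κ₂⟫_ℂ := by
  have hpr : ∀ κ, ∀ s ∈ S, ⟪S.starProjection κ, s⟫_ℂ = ⟪κ, s⟫_ℂ := by
    intro κ s hs
    rw [Submodule.inner_starProjection_left_eq_right, Submodule.starProjection_eq_self_iff.2 hs]
  have m₁ : S.starProjection κ₁ ∈ S := Submodule.starProjection_apply_mem _ _
  have m₂ : S.starProjection κ₂ ∈ S := Submodule.starProjection_apply_mem _ _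
  have e₁ : ⟪S.starProjection κ₁, V (S.starProjection κ₂)⟫_ℂ =
      conj c₁ * ⟪S.starProjection κ₁, S.starProjection κ₂⟫_ℂ := by
    rw [hpr _ _ (hS _ m₂), h₁ _ m₂, hpr _ _ m₂]
  have e₂ : ⟪V (S.starProjection κ₁), S.starProjection κ₂⟫_ℂ =
      c₂ * ⟪S.starProjection κ₁, S.starProjection κ₂⟫_ℂ := by
    rw [← inner_conj_symm, hpr _ _ (hS _ m₁), h₂ _ m₁, ← hpr κ₂ _ m₁, map_mul,
      Complex.conj_conj, inner_conj_symm]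
  rw [inner_sub_left, inner_sub_right, inner_sub_right, inner_smul_left, inner_smul_right,
    inner_smul_left, inner_smul_right, hV, e₁, e₂]
  ring

theorem core_abstract {ι : Type*} (V₁ V₂ : K →L[ℂ] K)
    (hV₁ : ∀ x y, ⟪V₁ x, V₁ y⟫_ℂ = ⟪x, y⟫_ℂ) (hV₂ : ∀ x y, ⟪V₂ x, V₂ y⟫_ℂ = ⟪x, y⟫_ℂ)
    (H N₀ N₁ : Submodule ℂ K) [H.HasOrthogonalProjection] (hHc : IsClosed (H : Set K))
    (hH₁ : ∀ f ∈ H, V₁ f ∈ H)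
    (hinv : ∀ s, (∀ n ∈ N₀, ⟪n, s⟫_ℂ = 0) → (∀ n ∈ N₁, ⟪n, s⟫_ℂ = 0) →
      (∀ n ∈ N₀, ⟪n, V₁ s⟫_ℂ = 0) ∧ (∀ n ∈ N₁, ⟪n, V₁ s⟫_ℂ = 0))
    (hN₁ : ∀ n ∈ N₁, V₂ n ∈ N₁ ∧ H.starProjection (V₂ n) = V₂ (H.starProjection n))
    (hN₀ : N₀ ≤ H) (hN : ∀ n ∈ N₀, ∀ m ∈ N₁, ⟪n, m⟫_ℂ = 0)
    (κ p : ι → K) (c₁ c₂ : ι → ℂ) (hκ : ∀ w, κ w ∈ H)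
    (hκ₁ : ∀ w, ∀ f ∈ H, ⟪κ w, V₁ f⟫_ℂ = conj (c₁ w) * ⟪κ w, f⟫_ℂ)
    (hκ₂ : ∀ w, ∀ f ∈ H, ⟪κ w, V₂ f⟫_ℂ = conj (c₂ w) * ⟪κ w, f⟫_ℂ)
    (hp : ∀ w, p w ∈ N₀) (hpκ : ∀ w, ∀ n ∈ N₀, ⟪n, κ w⟫_ℂ = ⟪n, p w⟫_ℂ) :
    ∃ a b : ι → K, ∀ w z,
      (1 - conj (c₁ w) * c₁ z) * (1 - conj (c₂ w) * c₂ z) * (⟪κ w, κ z⟫_ℂ - ⟪p w, p z⟫_ℂ) =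
      (1 - conj (c₁ w) * c₁ z) * ⟪b w, b z⟫_ℂ + (1 - conj (c₂ w) * c₂ z) * ⟪a w, a z⟫_ℂ := by
  have hPH : ∀ m, ∀ f ∈ H, ⟪H.starProjection m, f⟫_ℂ = ⟪m, f⟫_ℂ := by
    intro κ s hs
    rw [Submodule.inner_starProjection_left_eq_right, Submodule.starProjection_eq_self_iff.2 hs]
  set S₁ : Submodule ℂ K := H ⊓ (N₀ᗮ ⊓ N₁ᗮ) with hS₁
  set S₂ : Submodule ℂ K := (N₁.map (H.starProjection : K →ₗ[ℂ] K)).topologicalClosure with hS₂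
  have c1 : IsClosed (S₁ : Set K) := by
    rw [hS₁]
    exact hHc.inter ((Submodule.isClosed_orthogonal _).inter (Submodule.isClosed_orthogonal _))
  have c2 : IsClosed (S₂ : Set K) := Submodule.isClosed_topologicalClosure _
  have : CompleteSpace S₁ := c1.completeSpace_coe
  have : CompleteSpace S₂ := c2.completeSpace_coe
  have memS₁ : ∀ s, s ∈ S₁ ↔ s ∈ H ∧ (∀ n ∈ N₀, ⟪n, s⟫_ℂ = 0) ∧ (∀ n ∈ N₁, ⟪n, s⟫_ℂ = 0) := by
    intro s
    simp only [hS₁, Submodule.mem_inf, Submodule.mem_orthogonal]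
  have genS₂ : ∀ n ∈ N₁, H.starProjection n ∈ S₂ := fun n hn =>
    Submodule.le_topologicalClosure _ (Submodule.mem_map_of_mem hn)
  -- induction principle for closed predicates on `S₂`
  have indS₂ : ∀ T : Submodule ℂ K, IsClosed (T : Set K) →
      (∀ n ∈ N₁, H.starProjection n ∈ T) → S₂ ≤ T := by
    intro T hT h
    refine Submodule.topologicalClosure_minimal _ ?_ hT
    rintro _ ⟨n, hn, rfl⟩
    exact h n hn
  have hS₂H : S₂ ≤ H := indS₂ H hHc fun n _ => Submodule.starProjection_apply_mem _ _
  have inv₁ : ∀ s ∈ S₁, V₁ s ∈ S₁ := by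
    intro s hs
    rw [memS₁] at hs ⊢
    exact ⟨hH₁ _ hs.1, hinv s hs.2.1 hs.2.2⟩
  have inv₂ : ∀ s ∈ S₂, V₂ s ∈ S₂ := by
    have : S₂ ≤ S₂.comap (V₂ : K →ₗ[ℂ] K) := by
      refine indS₂ _ (c2.preimage V₂.continuous) ?_
      intro n hn
      rw [Submodule.mem_comap]
      change V₂ (H.starProjection n) ∈ S₂
      rw [← (hN₁ n hn).2]
      exact genS₂ _ (hN₁ n hn).1
    exact this
  have o02 : ∀ n ∈ N₀, ∀ s ∈ S₂, ⟪n, s⟫_ℂ = 0 := by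
    have : S₂ ≤ N₀ᗮ := by
      refine indS₂ _ (Submodule.isClosed_orthogonal _) ?_
      intro m hm
      rw [Submodule.mem_orthogonal]
      intro n hn
      rw [← inner_conj_symm, hPH _ _ (hN₀ hn), inner_conj_symm, hN n hn m hm]
    intro n hn s hs
    exact (Submodule.mem_orthogonal _ _).1 (this hs) n hn
  have o12 : ∀ n ∈ S₁, ∀ s ∈ S₂, ⟪n, s⟫_ℂ = 0 := by
    have : S₂ ≤ S₁ᗮ := by
      refine indS₂ _ (Submodule.isClosed_orthogonal _) ?_
      intro m hm
      rw [Submodule.mem_orthogonal]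
      intro n hn
      rw [memS₁] at hn
      rw [← inner_conj_symm, hPH _ _ hn.1, hn.2.2 m hm, map_zero]
    intro n hn s hs
    exact (Submodule.mem_orthogonal _ _).1 (this hs) n hn
  have pr₁ : ∀ k, ∀ s ∈ S₁, ⟪s, S₁.starProjection k⟫_ℂ = ⟪s, k⟫_ℂ := by
    intro κ s hs
    rw [← Submodule.inner_starProjection_left_eq_right, Submodule.starProjection_eq_self_iff.2 hs]
  have pr₂ : ∀ k, ∀ s ∈ S₂, ⟪s, S₂.starProjection k⟫_ℂ = ⟪s, k⟫_ℂ := by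
    intro κ s hs
    rw [← Submodule.inner_starProjection_left_eq_right, Submodule.starProjection_eq_self_iff.2 hs]
  have mx : ∀ k, S₁.starProjection k ∈ S₁ := fun k => Submodule.starProjection_apply_mem _ _
  have my : ∀ k, S₂.starProjection k ∈ S₂ := fun k => Submodule.starProjection_apply_mem _ _
  have flip : ∀ x y : K, ⟪x, y⟫_ℂ = 0 → ⟪y, x⟫_ℂ = 0 := fun x y h => inner_eq_zero_symm.1 h
  have decomp : ∀ w, κ w = p w + S₁.starProjection (κ w) + S₂.starProjection (κ w) := by
    intro w
    set d := κ w - p w - S₁.starProjection (κ w) - S₂.starProjection (κ w) with hd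
    have d1 : ∀ s ∈ S₁, ⟪s, d⟫_ℂ = 0 := by
      intro s hs
      rw [hd, inner_sub_right, inner_sub_right, inner_sub_right, pr₁ _ _ hs, o12 _ hs _ (my _),
        flip _ _ (((memS₁ s).1 hs).2.1 _ (hp w))]
      ring
    have dS : d ∈ S₁ := by
      rw [memS₁]
      refine ⟨?_, ?_, ?_⟩
      · exact H.sub_mem (H.sub_mem (H.sub_mem (hκ w) (hN₀ (hp w))) ((memS₁ _).1 (mx _)).1)
          (hS₂H (my _))
      · intro n hn
        rw [hd, inner_sub_right, inner_sub_right, inner_sub_right, hpκ w n hn, o02 n hn _ (my _),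
          ((memS₁ _).1 (mx _)).2.1 n hn]
        ring
      · intro m hm
        have dH : d ∈ H := H.sub_mem (H.sub_mem (H.sub_mem (hκ w) (hN₀ (hp w)))
          ((memS₁ _).1 (mx _)).1) (hS₂H (my _))
        rw [← hPH _ _ dH, hd, inner_sub_right, inner_sub_right, inner_sub_right,
          pr₂ _ _ (genS₂ m hm), flip _ _ (o02 _ (hp w) _ (genS₂ m hm)),
          flip _ _ (o12 _ (mx _) _ (genS₂ m hm))]
        ring
    have d0 : d = 0 := inner_self_eq_zero.1 (d1 d dS)
    rw [hd] at d0
    have := sub_eq_zero.1 d0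
    rw [← this]; abel
  refine ⟨fun w => S₁.starProjection (κ w) - c₁ w • V₁ (S₁.starProjection (κ w)),
    fun w => S₂.starProjection (κ w) - c₂ w • V₂ (S₂.starProjection (κ w)), ?_⟩
  intro w z
  have w1 := wandering V₁ hV₁ S₁ inv₁ (κ w) (κ z) (c₁ w) (c₁ z)
    (fun s hs => hκ₁ w s ((memS₁ s).1 hs).1) (fun s hs => hκ₁ z s ((memS₁ s).1 hs).1)
  have w2 := wandering V₂ hV₂ S₂ inv₂ (κ w) (κ z) (c₂ w) (c₂ z)
    (fun s hs => hκ₂ w s (hS₂H hs)) (fun s hs => hκ₂ z s (hS₂H hs))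
  have e : ⟪κ w, κ z⟫_ℂ = ⟪p w, p z⟫_ℂ + ⟪S₁.starProjection (κ w), S₁.starProjection (κ z)⟫_ℂ
      + ⟪S₂.starProjection (κ w), S₂.starProjection (κ z)⟫_ℂ := by
    conv_lhs => rw [decomp w, decomp z]
    simp only [inner_add_left, inner_add_right]
    rw [o12 _ (mx _) _ (my _), o02 _ (hp _) _ (my _), flip _ _ (o12 _ (mx _) _ (my _)),
      flip _ _ (o02 _ (hp _) _ (my _)), ((memS₁ _).1 (mx _)).2.1 _ (hp _),
      flip _ _ (((memS₁ _).1 (mx _)).2.1 _ (hp _))]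
    ring
  dsimp only
  rw [w1, w2, e]
  ring

end Core

section Scatter

set_option linter.unusedSectionVars false

open scoped ComplexConjugate InnerProductSpace

variable {L : Type*} [NormedAddCommGroup L] [InnerProductSpace ℂ L] [CompleteSpace L]

/-- `(x, y) ↦ (U x, U y)`. -/
noncomputable def dsum (U : L →L[ℂ] L) : WithLp 2 (L × L) →L[ℂ] WithLp 2 (L × L) :=
  ((WithLp.prodContinuousLinearEquiv 2 ℂ L L).symm : L × L →L[ℂ] WithLp 2 (L × L)).comp
    ((U.prodMap U).comp
      ((WithLp.prodContinuousLinearEquiv 2 ℂ L L) : WithLp 2 (L × L) →L[ℂ] L × L))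

/-- `x ↦ (M x, D x)`. -/
noncomputable def colop (M D : L →L[ℂ] L) : L →L[ℂ] WithLp 2 (L × L) :=
  ((WithLp.prodContinuousLinearEquiv 2 ℂ L L).symm : L × L →L[ℂ] WithLp 2 (L × L)).comp
    (M.prod D)

lemma dsum_apply (U : L →L[ℂ] L) (x : WithLp 2 (L × L)) :
    dsum U x = WithLp.toLp 2 (U x.fst, U x.snd) := rfl

lemma colop_apply (M D : L →L[ℂ] L) (x : L) :
    colop M D x = WithLp.toLp 2 (M x, D x) := rfl

lemma exists_defect (M : L →L[ℂ] L) (hM : ‖M‖ ≤ 1) :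
    ∃ Δ : L →L[ℂ] L, (∀ x y, ⟪M x, M y⟫_ℂ + ⟪Δ x, Δ y⟫_ℂ = ⟪x, y⟫_ℂ) ∧
      ∀ U ∈ unitary (L →L[ℂ] L), Commute M U → Commute Δ U := by
  have hpos : 0 ≤ 1 - star M * M := by
    rw [sub_nonneg]
    have := CStarAlgebra.star_mul_le_algebraMap_norm_sq (a := M)
    refine this.trans ?_
    rw [← map_one (algebraMap ℝ (L →L[ℂ] L))]
    have : ‖M‖ ^ 2 ≤ 1 := pow_le_one₀ (norm_nonneg _) hM
    exact algebraMap_mono _ this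
  have hsq := CFC.sqrt_mul_sqrt_self (1 - star M * M) hpos
  have hsa : star (CFC.sqrt (1 - star M * M)) = CFC.sqrt (1 - star M * M) :=
    (CFC.sqrt_nonneg (1 - star M * M)).isSelfAdjoint.star_eq
  refine ⟨CFC.sqrt (1 - star M * M), ?_, ?_⟩
  · intro x y
    set Δ := CFC.sqrt (1 - star M * M)
    have h1 : ⟪Δ x, Δ y⟫_ℂ = ⟪x, (Δ * Δ) y⟫_ℂ := by
      have h := ContinuousLinearMap.adjoint_inner_right Δ x (Δ y)
      rw [← ContinuousLinearMap.star_eq_adjoint, hsa] at h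
      exact h.symm
    have h2 : ⟪M x, M y⟫_ℂ = ⟪x, (star M * M) y⟫_ℂ := by
      rw [ContinuousLinearMap.star_eq_adjoint, mul_apply_eq_comp,
        ContinuousLinearMap.adjoint_inner_right]
    rw [h1, h2, hsq, ← inner_add_right]
    simp
  · intro U hU hc
    have h1 : Commute (star M) U := by
      have h2 : star U * star M = star M * star U := by
        rw [← star_mul, ← star_mul, hc.eq]
      have u1 := Unitary.star_mul_self_of_mem hU
      have u2 := Unitary.mul_star_self_of_mem hU
      calc star M * U = (U * star U) * star M * U := by rw [u2, one_mul]
        _ = U * (star U * star M) * U := by noncomm_ring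
        _ = U * star M * (star U * U) := by rw [h2]; noncomm_ring
        _ = U * star M := by rw [u1, mul_one]
    have h3 : Commute (1 - star M * M) U := (Commute.one_left U).sub_left (h1.mul_left hc)
    rw [CFC.sqrt]
    exact h3.cfcₙ_nnreal _

theorem scatter {φ : ℂ × ℂ → ℂ} (U₁ U₂ M : L →L[ℂ] L)
    (hU₁ : U₁ ∈ unitary (L →L[ℂ] L)) (hU₂ : U₂ ∈ unitary (L →L[ℂ] L)) (hM : ‖M‖ ≤ 1)
    (hMU₁ : Commute M U₁) (hMU₂ : Commute M U₂) (H R : Submodule ℂ L)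
    [H.HasOrthogonalProjection] (hHc : IsClosed (H : Set L))
    (hH₁ : ∀ f ∈ H, U₁ f ∈ H) (hHR : H ≤ R)
    (hR₁ : ∀ f ∈ R, star U₁ f ∈ R) (hR₂ : ∀ f ∈ R, U₂ f ∈ R)
    (hMH : ∀ f ∈ H, M f ∈ H) (hMR : ∀ f ∈ R, M f ∈ R)
    (hPU : ∀ f ∈ R, H.starProjection (U₂ f) = U₂ (H.starProjection f))
    (κ : Bidisk → L) (hκ : ∀ w, κ w ∈ H)
    (hκ₁ : ∀ w, ∀ f ∈ H, ⟪κ w, U₁ f⟫_ℂ = conj w.1.1 * ⟪κ w, f⟫_ℂ)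
    (hκ₂ : ∀ w, ∀ f ∈ H, ⟪κ w, U₂ f⟫_ℂ = conj w.1.2 * ⟪κ w, f⟫_ℂ)
    (hκM : ∀ w, ∀ f ∈ H, ⟪κ w, M f⟫_ℂ = conj (φ w) * ⟪κ w, f⟫_ℂ)
    (hκκ : ∀ w z, (1 - conj w.1.1 * z.1.1) * (1 - conj w.1.2 * z.1.2) * ⟪κ w, κ z⟫_ℂ = 1) :
    ∃ a b : Bidisk → WithLp 2 (L × L), ∀ w z : Bidisk,
      1 - conj (φ w) * φ z =
      (1 - conj w.1.1 * z.1.1) * ⟪b w, b z⟫_ℂ + (1 - conj w.1.2 * z.1.2) * ⟪a w, a z⟫_ℂ := by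
  obtain ⟨Δ, hΔ, hΔU⟩ := exists_defect M hM
  set W := colop M Δ with hW
  have hWi : ∀ x y, ⟪W x, W y⟫_ℂ = ⟪x, y⟫_ℂ := by
    intro x y
    rw [hW, colop_apply, colop_apply, WithLp.prod_inner_apply]
    exact hΔ x y
  have uni : ∀ U ∈ unitary (L →L[ℂ] L), ∀ x y, ⟪U x, U y⟫_ℂ = ⟪x, y⟫_ℂ := by
    intro U hU x y
    rw [← ContinuousLinearMap.adjoint_inner_right, ← ContinuousLinearMap.star_eq_adjoint,
      ← mul_apply_eq_comp, Unitary.star_mul_self_of_mem hU]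
    rfl
  have unid : ∀ U ∈ unitary (L →L[ℂ] L), ∀ x y, ⟪dsum U x, dsum U y⟫_ℂ = ⟪x, y⟫_ℂ := by
    intro U hU x y
    rw [dsum_apply, dsum_apply, WithLp.prod_inner_apply, WithLp.prod_inner_apply]
    change ⟪U _, U _⟫_ℂ + ⟪U _, U _⟫_ℂ = _
    rw [uni U hU, uni U hU]
    rfl
  have comW : ∀ U ∈ unitary (L →L[ℂ] L), Commute M U → ∀ x, W (U x) = dsum U (W x) := by
    intro U hU hc x
    have h1 : M (U x) = U (M x) := congrArg (fun T : L →L[ℂ] L => T x) hc.eq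
    have h2 : Δ (U x) = U (Δ x) := congrArg (fun T : L →L[ℂ] L => T x) (hΔU U hU hc).eq
    rw [hW, colop_apply, colop_apply, dsum_apply, h1, h2]
    rfl
  set HH : Submodule ℂ (WithLp 2 (L × L)) :=
    H.comap (((ContinuousLinearMap.fst ℂ L L).comp
      ((WithLp.prodContinuousLinearEquiv 2 ℂ L L) : WithLp 2 (L × L) →L[ℂ] L × L)) :
      WithLp 2 (L × L) →ₗ[ℂ] L) with hHH
  have memHH : ∀ x, x ∈ HH ↔ x.fst ∈ H := fun x => Iff.rfl
  have hHHc : IsClosed (HH : Set (WithLp 2 (L × L))) :=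
    hHc.preimage ((ContinuousLinearMap.fst ℂ L L).comp
      ((WithLp.prodContinuousLinearEquiv 2 ℂ L L) : WithLp 2 (L × L) →L[ℂ] L × L)).continuous
  have : CompleteSpace HH := hHHc.completeSpace_coe
  have projHH : ∀ x, HH.starProjection x = WithLp.toLp 2 (H.starProjection x.fst, x.snd) := by
    intro x
    refine Submodule.eq_starProjection_of_mem_of_inner_eq_zero ?_ ?_
    · rw [memHH]; exact Submodule.starProjection_apply_mem _ _
    · intro y hy
      rw [WithLp.prod_inner_apply]
      change ⟪x.fst - H.starProjection x.fst, y.fst⟫_ℂ + ⟪x.snd - x.snd, y.snd⟫_ℂ = 0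
      rw [sub_self, inner_zero_left, add_zero]
      exact Submodule.starProjection_inner_eq_zero _ _ hy
  have hWR : ∀ s, (∀ n ∈ H.map (W : L →ₗ[ℂ] _), ⟪n, s⟫_ℂ = 0) →
      (∀ n ∈ (R ⊓ Hᗮ).map (W : L →ₗ[ℂ] _), ⟪n, s⟫_ℂ = 0) → ∀ g ∈ R, ⟪W g, s⟫_ℂ = 0 := by
    intro s h0 h1 g hg
    have m0 : H.starProjection g ∈ H := Submodule.starProjection_apply_mem _ _
    have m1 : g - H.starProjection g ∈ R ⊓ Hᗮ :=
      ⟨R.sub_mem hg (hHR m0), Submodule.sub_starProjection_mem_orthogonal g⟩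
    have e : g = H.starProjection g + (g - H.starProjection g) := by abel
    have k0 : ⟪W (H.starProjection g), s⟫_ℂ = 0 := h0 _ ⟨_, m0, rfl⟩
    have k1 : ⟪W (g - H.starProjection g), s⟫_ℂ = 0 := h1 _ ⟨_, m1, rfl⟩
    rw [e, map_add, inner_add_left, k0, k1, add_zero]
  obtain ⟨a, b, hab⟩ := core_abstract (dsum U₁) (dsum U₂) (unid U₁ hU₁) (unid U₂ hU₂) HH
    (H.map (W : L →ₗ[ℂ] _)) ((R ⊓ Hᗮ).map (W : L →ₗ[ℂ] _)) hHHc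
    (fun f hf => hH₁ _ hf)
    (by
      intro s h0 h1
      have hs := hWR s h0 h1
      have key : ∀ g ∈ R, ⟪W g, dsum U₁ s⟫_ℂ = 0 := by
        intro g hg
        have e : g = U₁ (star U₁ g) := by
          rw [← mul_apply_eq_comp, Unitary.mul_star_self_of_mem hU₁]; rfl
        rw [e, comW U₁ hU₁ hMU₁, unid U₁ hU₁]
        exact hs _ (hR₁ g hg)
      refine ⟨?_, ?_⟩
      · rintro _ ⟨g, hg, rfl⟩
        exact key g (hHR hg)
      · rintro _ ⟨g, hg, rfl⟩
        exact key g hg.1)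
    (by
      rintro _ ⟨g, hg, rfl⟩
      have hg0 : H.starProjection g = 0 :=
        (Submodule.starProjection_apply_eq_zero_iff _).2 hg.2
      refine ⟨⟨U₂ g, ⟨hR₂ g hg.1, ?_⟩, comW U₂ hU₂ hMU₂ g⟩, ?_⟩
      · change U₂ g ∈ Hᗮ
        rw [← Submodule.starProjection_apply_eq_zero_iff, hPU g hg.1, hg0, map_zero]
      · rw [projHH, projHH]
        change WithLp.toLp 2 (H.starProjection (U₂ (M g)), U₂ (Δ g)) =
          WithLp.toLp 2 (U₂ (H.starProjection (M g)), U₂ (Δ g))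
        rw [hPU _ (hMR g hg.1)])
    (by
      rintro _ ⟨g, hg, rfl⟩
      exact hMH g hg)
    (by
      rintro _ ⟨g, hg, rfl⟩ _ ⟨m, hm, rfl⟩
      exact (hWi g m).trans ((Submodule.mem_orthogonal _ _).1 hm.2 g hg))
    (fun w => WithLp.toLp 2 (κ w, 0)) (fun w => W (φ w • κ w))
    (fun w : Bidisk => w.1.1) (fun w : Bidisk => w.1.2) (fun w => hκ w)
    (by
      intro w f hf
      rw [dsum_apply, WithLp.prod_inner_apply, WithLp.prod_inner_apply]
      change ⟪κ w, U₁ f.fst⟫_ℂ + ⟪(0 : L), U₁ f.snd⟫_ℂ =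
        conj w.1.1 * (⟪κ w, f.fst⟫_ℂ + ⟪(0 : L), f.snd⟫_ℂ)
      rw [inner_zero_left, inner_zero_left, add_zero, add_zero, hκ₁ w _ ((memHH f).1 hf)])
    (by
      intro w f hf
      rw [dsum_apply, WithLp.prod_inner_apply, WithLp.prod_inner_apply]
      change ⟪κ w, U₂ f.fst⟫_ℂ + ⟪(0 : L), U₂ f.snd⟫_ℂ =
        conj w.1.2 * (⟪κ w, f.fst⟫_ℂ + ⟪(0 : L), f.snd⟫_ℂ)
      rw [inner_zero_left, inner_zero_left, add_zero, add_zero, hκ₂ w _ ((memHH f).1 hf)])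
    (fun w => ⟨_, H.smul_mem _ (hκ w), rfl⟩)
    (by
      rintro w _ ⟨g, hg, rfl⟩
      refine Eq.trans ?_ (hWi _ _).symm
      change ⟪W g, _⟫_ℂ = _
      rw [hW, colop_apply, WithLp.prod_inner_apply]
      change ⟪M g, κ w⟫_ℂ + ⟪Δ g, (0 : L)⟫_ℂ = _
      rw [inner_zero_right, add_zero, ← inner_conj_symm, hκM w g hg, map_mul,
        Complex.conj_conj, inner_conj_symm, inner_smul_right])
  refine ⟨a, b, fun w z => ?_⟩
  rw [← hab w z]
  have e1 : ⟪WithLp.toLp 2 (κ w, (0 : L)), WithLp.toLp 2 (κ z, (0 : L))⟫_ℂ = ⟪κ w, κ z⟫_ℂ := by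
    rw [WithLp.prod_inner_apply]
    change ⟪κ w, κ z⟫_ℂ + ⟪(0 : L), (0 : L)⟫_ℂ = _
    rw [inner_zero_right, add_zero]
  rw [e1, hWi, inner_smul_left, inner_smul_right]
  linear_combination (-(1 - conj (φ w) * φ z)) * hκκ w z

end Scatter

section Torus

open MeasureTheory UnitAddTorus
open scoped ComplexConjugate InnerProductSpace ENNReal

noncomputable local instance torusCircleMeasureSpace : MeasureSpace UnitAddCircle :=
  ⟨AddCircle.haarAddCircle⟩

local instance torusCircleProb : IsProbabilityMeasure (volume : Measure UnitAddCircle) :=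
  inferInstanceAs (IsProbabilityMeasure AddCircle.haarAddCircle)

local instance torusCircleHaar : Measure.IsAddHaarMeasure (volume : Measure UnitAddCircle) :=
  inferInstanceAs (Measure.IsAddHaarMeasure AddCircle.haarAddCircle)

/-- `L²` of the two-dimensional torus. -/
abbrev TorusL2 : Type := Lp ℂ 2 (volume : Measure (UnitAddTorus (Fin 2)))

lemma mul_memLp (f : C(UnitAddTorus (Fin 2), ℂ)) (g : TorusL2) :
    MemLp (fun x => f x * g x) 2 (volume : Measure (UnitAddTorus (Fin 2))) := by
  refine MemLp.of_le_mul (Lp.memLp g) (c := ‖f‖)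
    (f.continuous.aestronglyMeasurable.mul (Lp.aestronglyMeasurable g)) ?_
  filter_upwards with x
  rw [norm_mul]
  exact mul_le_mul_of_nonneg_right (f.norm_coe_le_norm x) (norm_nonneg _)

/-- Multiplication by a continuous function. -/
noncomputable def mulOp (f : C(UnitAddTorus (Fin 2), ℂ)) : TorusL2 →L[ℂ] TorusL2 :=
  LinearMap.mkContinuous
    { toFun := fun g => (mul_memLp f g).toLp _
      map_add' := fun g h => by
        ext1
        filter_upwards [(mul_memLp f (g + h)).coeFn_toLp, (mul_memLp f g).coeFn_toLp,
          (mul_memLp f h).coeFn_toLp, Lp.coeFn_add g h,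
          Lp.coeFn_add ((mul_memLp f g).toLp _) ((mul_memLp f h).toLp _)] with x h1 h2 h3 h4 h5
        rw [h1, h5, Pi.add_apply, h2, h3, h4, Pi.add_apply, mul_add]
      map_smul' := fun c g => by
        ext1
        filter_upwards [(mul_memLp f (c • g)).coeFn_toLp, (mul_memLp f g).coeFn_toLp,
          Lp.coeFn_smul c g, Lp.coeFn_smul c ((mul_memLp f g).toLp _)] with x h1 h2 h3 h4
        simp only [RingHom.id_apply]
        rw [h1, h4, Pi.smul_apply, h2, h3, Pi.smul_apply, smul_eq_mul, smul_eq_mul]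
        ring }
    ‖f‖ (fun g => by
      refine Lp.norm_le_mul_norm_of_ae_le_mul ?_
      filter_upwards [(mul_memLp f g).coeFn_toLp] with x h1
      simp only [LinearMap.coe_mk, AddHom.coe_mk]
      rw [h1, norm_mul]
      exact mul_le_mul_of_nonneg_right (f.norm_coe_le_norm x) (norm_nonneg _))

lemma mulOp_coe (f : C(UnitAddTorus (Fin 2), ℂ)) (g : TorusL2) :
    (mulOp f g : UnitAddTorus (Fin 2) → ℂ) =ᵐ[volume] fun x => f x * g x :=
  (mul_memLp f g).coeFn_toLp

lemma mulOp_norm (f : C(UnitAddTorus (Fin 2), ℂ)) : ‖mulOp f‖ ≤ ‖f‖ :=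
  LinearMap.mkContinuous_norm_le _ (norm_nonneg _) _

lemma mulOp_mul (f g : C(UnitAddTorus (Fin 2), ℂ)) : mulOp (f * g) = mulOp f * mulOp g := by
  ext h
  filter_upwards [mulOp_coe (f * g) h, mulOp_coe f (mulOp g h), mulOp_coe g h] with x h1 h2 h3
  rw [h1]
  change _ = (mulOp f (mulOp g h) : UnitAddTorus (Fin 2) → ℂ) x
  rw [h2, h3, ContinuousMap.mul_apply, mul_assoc]

lemma mulOp_one : mulOp 1 = 1 := by
  ext h
  filter_upwards [mulOp_coe 1 h] with x h1
  rw [h1]; simp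

lemma mulOp_add (f g : C(UnitAddTorus (Fin 2), ℂ)) : mulOp (f + g) = mulOp f + mulOp g := by
  ext h
  filter_upwards [mulOp_coe (f + g) h, mulOp_coe f h, mulOp_coe g h,
    Lp.coeFn_add (mulOp f h) (mulOp g h)] with x h1 h2 h3 h4
  rw [h1]
  change _ = ((mulOp f h + mulOp g h : TorusL2) : UnitAddTorus (Fin 2) → ℂ) x
  rw [h4, Pi.add_apply, h2, h3, ContinuousMap.add_apply, add_mul]

lemma mulOp_smul (c : ℂ) (f : C(UnitAddTorus (Fin 2), ℂ)) : mulOp (c • f) = c • mulOp f := by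
  ext h
  filter_upwards [mulOp_coe (c • f) h, mulOp_coe f h,
    Lp.coeFn_smul c (mulOp f h)] with x h1 h2 h4
  rw [h1]
  change _ = ((c • mulOp f h : TorusL2) : UnitAddTorus (Fin 2) → ℂ) x
  rw [h4, Pi.smul_apply, h2, ContinuousMap.smul_apply, smul_eq_mul, smul_eq_mul, mul_assoc]

/-- `mulOp` as an algebra homomorphism. -/
noncomputable def mulHom : C(UnitAddTorus (Fin 2), ℂ) →ₐ[ℂ] (TorusL2 →L[ℂ] TorusL2) :=
  AlgHom.ofLinearMap
    { toFun := mulOp, map_add' := mulOp_add, map_smul' := mulOp_smul } mulOp_one mulOp_mul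

lemma mulHom_apply (f : C(UnitAddTorus (Fin 2), ℂ)) : mulHom f = mulOp f := rfl

lemma mulOp_fourier (m n : Fin 2 → ℤ) :
    mulOp (mFourier m) (mFourierBasis n) = (mFourierBasis (m + n) : TorusL2) := by
  rw [coe_mFourierBasis]
  ext1
  filter_upwards [mulOp_coe (mFourier m) (mFourierLp 2 n), coeFn_mFourierLp 2 n,
    coeFn_mFourierLp 2 (m + n)] with x h1 h2 h3
  rw [h1, h2, h3, mFourier_add]

lemma mulOp_fourier_norm (m : Fin 2 → ℤ) (f : TorusL2) : ‖mulOp (mFourier m) f‖ = ‖f‖ := by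
  have key : ∀ (m : Fin 2 → ℤ) (f : TorusL2), ‖mulOp (mFourier m) f‖ ≤ ‖f‖ := fun m f => by
    refine ((mulOp (mFourier m)).le_of_opNorm_le ((mulOp_norm _).trans mFourier_norm.le) f).trans ?_
    simp
  refine le_antisymm (key m f) ?_
  have h := key (-m) (mulOp (mFourier m) f)
  have : mulOp (mFourier (-m)) (mulOp (mFourier m) f) = f := by
    change (mulOp (mFourier (-m)) * mulOp (mFourier m)) f = f
    rw [← mulOp_mul]
    have : (mFourier (-m) * mFourier m : C(UnitAddTorus (Fin 2), ℂ)) = 1 := by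
      ext x
      rw [ContinuousMap.mul_apply, ← mFourier_add, neg_add_cancel, mFourier_zero]
    rw [this, mulOp_one]; rfl
  rwa [this] at h

lemma mulOp_fourier_unitary (m : Fin 2 → ℤ) : mulOp (mFourier m) ∈ unitary (TorusL2 →L[ℂ] TorusL2) := by
  have hs : ∀ m : Fin 2 → ℤ, star (mulOp (mFourier m)) * mulOp (mFourier m) = 1 := fun m =>
    (ContinuousLinearMap.norm_map_iff_adjoint_comp_self _).1 (mulOp_fourier_norm m)
  have hm : ∀ m : Fin 2 → ℤ, mulOp (mFourier m) * mulOp (mFourier (-m)) = 1 := fun m => by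
    rw [← mulOp_mul]
    have : (mFourier m * mFourier (-m) : C(UnitAddTorus (Fin 2), ℂ)) = 1 := by
      ext x
      rw [ContinuousMap.mul_apply, ← mFourier_add, add_neg_cancel, mFourier_zero]
    rw [this, mulOp_one]
  have h2 : star (mulOp (mFourier m)) = mulOp (mFourier (-m)) := by
    calc star (mulOp (mFourier m)) = star (mulOp (mFourier m)) * (mulOp (mFourier m) * mulOp (mFourier (-m))) := by
          rw [hm, mul_one]
      _ = _ := by rw [← mul_assoc, hs, one_mul]
  exact ⟨hs m, by rw [h2, hm]⟩

/-- The model: two commuting bilateral shifts with von Neumann's inequality. -/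
theorem torus_model : ∃ (L : Type) (_ : NormedAddCommGroup L) (_ : InnerProductSpace ℂ L)
    (_ : CompleteSpace L) (e : HilbertBasis (Fin 2 → ℤ) ℂ L) (U₁ U₂ : L →L[ℂ] L),
    U₁ ∈ unitary (L →L[ℂ] L) ∧ U₂ ∈ unitary (L →L[ℂ] L) ∧ Commute U₁ U₂ ∧
    (∀ n, U₁ (e n) = e (Pi.single 0 1 + n)) ∧ (∀ n, U₂ (e n) = e (Pi.single 1 1 + n)) ∧
    ∀ (N : ℕ) (c : ℕ → ℕ → ℂ),
      (∀ z : ℂ × ℂ, ‖z.1‖ ≤ 1 → ‖z.2‖ ≤ 1 → ‖polyEval N c z‖ ≤ 1) →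
      ‖∑ i ∈ Finset.range N, ∑ j ∈ Finset.range N, c i j • (U₁ ^ i * U₂ ^ j)‖ ≤ 1 := by
  refine ⟨TorusL2, inferInstance, inferInstance, inferInstance, mFourierBasis,
    mulHom (mFourier (Pi.single 0 1)), mulHom (mFourier (Pi.single 1 1)),
    mulOp_fourier_unitary _, mulOp_fourier_unitary _, ?_, fun n => mulOp_fourier _ _,
    fun n => mulOp_fourier _ _, ?_⟩
  · exact (Commute.all _ _).map mulHom
  · intro N c h
    have : ∑ i ∈ Finset.range N, ∑ j ∈ Finset.range N, c i j •
        (mulHom (mFourier (Pi.single 0 1)) ^ i * mulHom (mFourier (Pi.single 1 1)) ^ j) =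
        mulHom (∑ i ∈ Finset.range N, ∑ j ∈ Finset.range N, c i j •
        ((mFourier (Pi.single 0 1)) ^ i * (mFourier (Pi.single 1 1)) ^ j)) := by
      simp [map_sum]
    rw [this]
    refine (mulOp_norm _).trans ?_
    rw [ContinuousMap.norm_le _ zero_le_one]
    intro x
    have hx : ∀ m : Fin 2 → ℤ, ‖mFourier m x‖ ≤ 1 := fun m =>
      ((mFourier m).norm_coe_le_norm x).trans mFourier_norm.le
    refine le_trans (le_of_eq (congrArg norm ?_))
      (h (mFourier (Pi.single 0 1) x, mFourier (Pi.single 1 1) x) (hx _) (hx _))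
    simp [polyEval, ContinuousMap.sum_apply]

end Torus

section WeakLimit

open Filter Topology
open scoped ComplexConjugate InnerProductSpace

variable {L : Type*} [NormedAddCommGroup L] [InnerProductSpace ℂ L] [CompleteSpace L]

theorem weak_limit (M : ℕ → L →L[ℂ] L) (hM : ∀ k, ‖M k‖ ≤ 1) :
    ∃ T : L →L[ℂ] L, ‖T‖ ≤ 1 ∧ ∀ x y, Tendsto (fun k => ⟪x, M k y⟫_ℂ)
      (hyperfilter ℕ : Filter ℕ) (𝓝 ⟪x, T y⟫_ℂ) := by
  have hb : ∀ x y k, ‖⟪x, M k y⟫_ℂ‖ ≤ ‖x‖ * ‖y‖ := fun x y k => by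
    refine (norm_inner_le_norm _ _).trans (mul_le_mul_of_nonneg_left ?_ (norm_nonneg _))
    simpa using (M k).le_of_opNorm_le (hM k) y
  have hex : ∀ x y, ∃ b : ℂ, Tendsto (fun k => ⟪x, M k y⟫_ℂ)
      (hyperfilter ℕ : Filter ℕ) (𝓝 b) := fun x y => by
    obtain ⟨b, -, hb'⟩ := (isCompact_closedBall (0 : ℂ) (‖x‖ * ‖y‖)).ultrafilter_le_nhds
      ((hyperfilter ℕ).map (fun k => ⟪x, M k y⟫_ℂ)) (by
        rw [Ultrafilter.coe_map, le_principal_iff]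
        exact Filter.mem_map.2 (Filter.univ_mem' fun k => by simpa using hb x y k))
    exact ⟨b, hb'⟩
  choose B hB using hex
  let Bl : L →L⋆[ℂ] L →L[ℂ] ℂ := LinearMap.mkContinuous₂
    (LinearMap.mk₂'ₛₗ (starRingEnd ℂ) (RingHom.id ℂ) B
      (fun x x' y => tendsto_nhds_unique (hB _ _) (by
        simpa [inner_add_left] using (hB x y).add (hB x' y)))
      (fun c x y => tendsto_nhds_unique (hB _ _) (by
        simpa [inner_smul_left, mul_comm] using (hB x y).const_mul (conj c)))
      (fun x y y' => tendsto_nhds_unique (hB _ _) (by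
        simpa [inner_add_right] using (hB x y).add (hB x y')))
      (fun c x y => tendsto_nhds_unique (hB _ _) (by
        simpa [inner_smul_right] using (hB x y).const_mul c))) 1
    (fun x y => by
      rw [one_mul]
      exact le_of_tendsto (hB x y).norm (Eventually.of_forall fun k => hb x y k))
  let S := InnerProductSpace.continuousLinearMapOfBilin Bl
  have hS : ∀ x y, ⟪x, ContinuousLinearMap.adjoint S y⟫_ℂ = B x y := fun x y => by
    rw [ContinuousLinearMap.adjoint_inner_right]
    exact InnerProductSpace.continuousLinearMapOfBilin_apply Bl x y
  have hT : ∀ x y, Tendsto (fun k => ⟪x, M k y⟫_ℂ)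
      (hyperfilter ℕ : Filter ℕ) (𝓝 ⟪x, ContinuousLinearMap.adjoint S y⟫_ℂ) := fun x y => by
    rw [hS]; exact hB x y
  refine ⟨ContinuousLinearMap.adjoint S, ?_, hT⟩
  refine ContinuousLinearMap.opNorm_le_bound _ zero_le_one fun y => ?_
  rw [one_mul]
  set z := ContinuousLinearMap.adjoint S y
  have h1 : ‖⟪z, z⟫_ℂ‖ ≤ ‖z‖ * ‖y‖ :=
    le_of_tendsto (hT z y).norm (Eventually.of_forall fun k => hb z y k)
  rw [inner_self_eq_norm_sq_to_K] at h1
  have h2 : ‖z‖ * ‖z‖ ≤ ‖z‖ * ‖y‖ := by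
    simpa [sq] using h1
  rcases (norm_nonneg z).eq_or_lt with h | h
  · rw [← h]; exact norm_nonneg _
  · exact le_of_mul_le_mul_left h2 h

end WeakLimit

section Model

open Filter Topology
open scoped ComplexConjugate InnerProductSpace

variable {L : Type*} [NormedAddCommGroup L] [InnerProductSpace ℂ L] [CompleteSpace L]
  {ι : Type*}

/-- The closed subspace of vectors whose coordinates are supported in `A`. -/
def coordSub (e : HilbertBasis ι ℂ L) (A : Set ι) : Submodule ℂ L where
  carrier := {f | ∀ n, n ∉ A → ⟪e n, f⟫_ℂ = 0}
  add_mem' := fun ha hb n hn => by rw [inner_add_right, ha n hn, hb n hn, add_zero]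
  zero_mem' := fun n _ => inner_zero_right _
  smul_mem' := fun c x hx n hn => by rw [inner_smul_right, hx n hn, mul_zero]

lemma mem_coordSub {e : HilbertBasis ι ℂ L} {A : Set ι} {f : L} :
    f ∈ coordSub e A ↔ ∀ n, n ∉ A → ⟪e n, f⟫_ℂ = 0 := Iff.rfl

lemma coordSub_closed (e : HilbertBasis ι ℂ L) (A : Set ι) :
    IsClosed (coordSub e A : Set L) := by
  have : (coordSub e A : Set L) = ⋂ n, ⋂ (_ : n ∉ A), {f | ⟪e n, f⟫_ℂ = 0} := by
    ext f; simp [mem_coordSub]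
  rw [this]
  refine isClosed_iInter fun n => isClosed_iInter fun _ => ?_
  exact isClosed_eq (by fun_prop) continuous_const

lemma coordSub_mono (e : HilbertBasis ι ℂ L) {A B : Set ι} (h : A ⊆ B) :
    coordSub e A ≤ coordSub e B := fun _ hf n hn => hf n fun hA => hn (h hA)

lemma basis_mem (e : HilbertBasis ι ℂ L) {A : Set ι} {m : ι} (h : m ∈ A) :
    e m ∈ coordSub e A := fun n hn => by
  refine e.orthonormal.2 ?_
  rintro rfl
  exact hn h

lemma coordSub_orth (e : HilbertBasis ι ℂ L) {A B : Set ι} (h : Disjoint A B) {f g : L}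
    (hf : f ∈ coordSub e A) (hg : g ∈ coordSub e B) : ⟪f, g⟫_ℂ = 0 := by
  rw [← e.tsum_inner_mul_inner f g]
  rw [tsum_congr (g := fun _ => 0), tsum_zero]
  intro n
  by_cases hn : n ∈ A
  · rw [hg n (Set.disjoint_left.1 h hn), mul_zero]
  · rw [← inner_conj_symm, hf n hn, map_zero, zero_mul]

lemma basis_ext (e : HilbertBasis ι ℂ L) {f g : L} (h : ∀ n, ⟪e n, f⟫_ℂ = ⟪e n, g⟫_ℂ) :
    f = g := by
  apply e.repr.injective
  ext n
  rw [e.repr_apply_apply, e.repr_apply_apply, h]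

lemma inner_proj (e : HilbertBasis ι ℂ L) (A : Set ι) [(coordSub e A).HasOrthogonalProjection]
    (f : L) (n : ι) (hn : n ∈ A) : ⟪e n, (coordSub e A).starProjection f⟫_ℂ = ⟪e n, f⟫_ℂ := by
  rw [← Submodule.inner_starProjection_left_eq_right,
    Submodule.starProjection_eq_self_iff.2 (basis_mem e hn)]

lemma inner_proj_not (e : HilbertBasis ι ℂ L) (A : Set ι)
    [(coordSub e A).HasOrthogonalProjection]
    (f : L) (n : ι) (hn : n ∉ A) : ⟪e n, (coordSub e A).starProjection f⟫_ℂ = 0 :=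
  (Submodule.starProjection_apply_mem (coordSub e A) f : _ ∈ coordSub e A) n hn

/-- Solutions of `x - w U x = g ∈ S` lie in `S`. -/
lemma neumann_mem (U : L →L[ℂ] L) (hU : ∀ f, ‖U f‖ = ‖f‖) (S : Submodule ℂ L)
    (hS : IsClosed (S : Set L)) (hSU : ∀ f ∈ S, U f ∈ S) {w : ℂ} (hw : ‖w‖ < 1) {x : L}
    (hx : x - w • U x ∈ S) : x ∈ S := by
  have hy : ∀ n : ℕ, x - ((w • U) ^ n) x ∈ S := fun n => by
    induction n with
    | zero => simp
    | succ n ih =>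
      have h1 : x - ((w • U) ^ (n + 1)) x
          = w • U (x - ((w • U) ^ n) x) + (x - w • U x) := by
        rw [pow_succ']
        change x - w • U (((w • U) ^ n) x) = _
        rw [map_sub, smul_sub]; abel
      rw [h1]
      exact S.add_mem (S.smul_mem _ (hSU _ ih)) hx
  have hn : ∀ n : ℕ, ‖((w • U) ^ n) x‖ = ‖w‖ ^ n * ‖x‖ := fun n => by
    induction n with
    | zero => simp
    | succ n ih =>
      rw [pow_succ']
      change ‖w • U (((w • U) ^ n) x)‖ = _
      rw [norm_smul, hU, ih]; ring
  have ht : Tendsto (fun n : ℕ => ((w • U) ^ n) x) atTop (𝓝 0) := by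
    rw [tendsto_zero_iff_norm_tendsto_zero]
    simp_rw [hn]
    simpa using (tendsto_pow_atTop_nhds_zero_of_lt_one (norm_nonneg w) hw).mul_const ‖x‖
  have := (tendsto_const_nhds (x := x)).sub ht
  rw [sub_zero] at this
  exact hS.mem_of_tendsto this (Eventually.of_forall hy)

lemma neumann_exists (U : L →L[ℂ] L) (hU : ∀ f, ‖U f‖ = ‖f‖) {w : ℂ} (hw : ‖w‖ < 1) (g : L) :
    ∃ x : L, x - w • U x = g := by
  have hn : ‖w • U‖ < 1 := by
    refine lt_of_le_of_lt ?_ hw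
    refine ContinuousLinearMap.opNorm_le_bound _ (norm_nonneg _) fun f => ?_
    rw [ContinuousLinearMap.smul_apply, norm_smul, hU]
  obtain ⟨u, hu⟩ := isUnit_one_sub_of_norm_lt_one hn
  refine ⟨(u⁻¹ : (L →L[ℂ] L)ˣ).1 g, ?_⟩
  have h1 : (u.1 * (u⁻¹ : (L →L[ℂ] L)ˣ).1) g = g := by
    rw [Units.mul_inv]; rfl
  rw [hu] at h1
  exact h1

lemma unitary_norm {U : L →L[ℂ] L} (hU : U ∈ unitary (L →L[ℂ] L)) (f : L) : ‖U f‖ = ‖f‖ :=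
  (ContinuousLinearMap.norm_map_iff_adjoint_comp_self U).2 hU.1 f

lemma unitary_inner {U : L →L[ℂ] L} (hU : U ∈ unitary (L →L[ℂ] L)) (f g : L) :
    ⟪U f, U g⟫_ℂ = ⟪f, g⟫_ℂ :=
  (ContinuousLinearMap.inner_map_map_iff_adjoint_comp_self U).2 hU.1 f g

lemma inner_shift {U : L →L[ℂ] L} (hU : U ∈ unitary (L →L[ℂ] L)) (e : HilbertBasis (Fin 2 → ℤ) ℂ L)
    {d : Fin 2 → ℤ} (hd : ∀ n, U (e n) = e (d + n)) (n : Fin 2 → ℤ) (f : L) :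
    ⟪e n, U f⟫_ℂ = ⟪e (n - d), f⟫_ℂ := by
  have : e n = U (e (n - d)) := by rw [hd]; congr 1; abel
  rw [this, unitary_inner hU]

lemma inner_star_shift {U : L →L[ℂ] L} (e : HilbertBasis (Fin 2 → ℤ) ℂ L)
    {d : Fin 2 → ℤ} (hd : ∀ n, U (e n) = e (d + n)) (n : Fin 2 → ℤ) (f : L) :
    ⟪e n, star U f⟫_ℂ = ⟪e (d + n), f⟫_ℂ := by
  rw [ContinuousLinearMap.star_eq_adjoint, ContinuousLinearMap.adjoint_inner_right, hd]

lemma shift_mem {U : L →L[ℂ] L} (hU : U ∈ unitary (L →L[ℂ] L)) (e : HilbertBasis (Fin 2 → ℤ) ℂ L)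
    {d : Fin 2 → ℤ} (hd : ∀ n, U (e n) = e (d + n)) {A B : Set (Fin 2 → ℤ)}
    (hAB : ∀ n, n ∉ B → n - d ∉ A) {f : L} (hf : f ∈ coordSub e A) : U f ∈ coordSub e B :=
  fun n hn => by
    rw [inner_shift hU e hd]; exact hf _ (hAB n hn)

theorem agler_decomposition (φ : ℂ × ℂ → ℂ) (hd : DifferentiableOn ℂ φ Bidisk)
    (hb : ∀ w ∈ Bidisk, ‖φ w‖ ≤ 1) :
    ∃ (K : Type) (_ : NormedAddCommGroup K) (_ : InnerProductSpace ℂ K)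
      (_ : CompleteSpace K) (a b : Bidisk → K), ∀ w z : Bidisk,
      1 - conj (φ w) * φ z = (1 - conj w.1.1 * z.1.1) * ⟪b w, b z⟫_ℂ
        + (1 - conj w.1.2 * z.1.2) * ⟪a w, a z⟫_ℂ := by
  obtain ⟨N, c, hc1, hc2⟩ := approx_poly φ hd hb
  obtain ⟨L, _, _, _, e, U₁, U₂, hU₁, hU₂, hcomm, he₁, he₂, hvn⟩ := torus_model
  set H : Submodule ℂ L := coordSub e {n | 0 ≤ n 0 ∧ 0 ≤ n 1} with hHdef
  set R : Submodule ℂ L := coordSub e {n | 0 ≤ n 1} with hRdef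
  have hHc : IsClosed (H : Set L) := coordSub_closed _ _
  haveI : CompleteSpace H := hHc.completeSpace_coe
  -- invariance
  have hH₁ : ∀ f ∈ H, U₁ f ∈ H := fun f hf => shift_mem hU₁ e he₁ (by
    intro n hn; simp at hn ⊢; omega) hf
  have hH₂ : ∀ f ∈ H, U₂ f ∈ H := fun f hf => shift_mem hU₂ e he₂ (by
    intro n hn; simp at hn ⊢; omega) hf
  have hHR : H ≤ R := coordSub_mono e fun n hn => hn.2
  have hR₁ : ∀ f ∈ R, star U₁ f ∈ R := fun f hf n hn => by
    rw [inner_star_shift e he₁]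
    exact hf _ (by simp at hn ⊢; omega)
  have hR₁' : ∀ f ∈ R, U₁ f ∈ R := fun f hf => shift_mem hU₁ e he₁ (by
    intro n hn; simp at hn ⊢; omega) hf
  have hR₂ : ∀ f ∈ R, U₂ f ∈ R := fun f hf => shift_mem hU₂ e he₂ (by
    intro n hn; simp at hn ⊢; omega) hf
  have hPU : ∀ f ∈ R, H.starProjection (U₂ f) = U₂ (H.starProjection f) := fun f hf => by
    refine basis_ext e fun n => ?_
    rw [inner_shift hU₂ e he₂]
    by_cases hn : n ∈ {n : Fin 2 → ℤ | 0 ≤ n 0 ∧ 0 ≤ n 1}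
    · rw [inner_proj e _ _ n hn, inner_shift hU₂ e he₂]
      by_cases hn' : n - Pi.single 1 1 ∈ {n : Fin 2 → ℤ | 0 ≤ n 0 ∧ 0 ≤ n 1}
      · rw [inner_proj e _ _ _ hn']
      · rw [inner_proj_not e _ _ _ hn']
        exact hf _ (by simp at hn hn' ⊢; omega)
    · rw [inner_proj_not e _ _ n hn, inner_proj_not e _ _ _ (by simp at hn ⊢; omega)]
  -- the kernel vectors
  have hκex : ∀ w : Bidisk, ∃ l κ : L, l - w.1.2 • U₂ l = e 0 ∧ κ - w.1.1 • U₁ κ = l := fun w => by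
    obtain ⟨l, hl⟩ := neumann_exists U₂ (unitary_norm hU₂) w.2.2 (e 0)
    obtain ⟨k, hk⟩ := neumann_exists U₁ (unitary_norm hU₁) w.2.1 l
    exact ⟨l, k, hl, hk⟩
  choose l κ hl hκl using hκex
  have hlH : ∀ w, l w ∈ H := fun w =>
    neumann_mem U₂ (unitary_norm hU₂) H hHc hH₂ w.2.2 (by
      rw [hl]; exact basis_mem e (by simp))
  have hκ : ∀ w, κ w ∈ H := fun w =>
    neumann_mem U₁ (unitary_norm hU₁) H hHc hH₁ w.2.1 (by rw [hκl]; exact hlH w)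
  have hl0 : ∀ w, l w ∈ coordSub e {n | n 0 = 0} := fun w =>
    neumann_mem U₂ (unitary_norm hU₂) _ (coordSub_closed _ _)
      (fun f hf => shift_mem hU₂ e he₂ (by intro n hn; simpa using hn) hf) w.2.2 (by
      rw [hl]; exact basis_mem e (by simp))
  have hm0 : ∀ w : Bidisk, κ w - w.1.2 • U₂ (κ w) ∈ coordSub e {n | n 1 = 0} := fun w =>
    neumann_mem U₁ (unitary_norm hU₁) _ (coordSub_closed _ _)
      (fun f hf => shift_mem hU₁ e he₁ (by intro n hn; simpa using hn) hf) w.2.1 (by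
      have h12 : U₁ (U₂ (κ w)) = U₂ (U₁ (κ w)) := congrArg (fun T : L →L[ℂ] L => T (κ w)) hcomm
      have : κ w - w.1.2 • U₂ (κ w) - w.1.1 • U₁ (κ w - w.1.2 • U₂ (κ w)) = e 0 := by
        rw [← hl w, ← hκl w]
        simp only [map_sub, map_smul, smul_sub, h12]
        rw [smul_comm]; abel
      rw [this]; exact basis_mem e (by simp))
  have hU1pos : ∀ f ∈ H, U₁ f ∈ coordSub e {n | 1 ≤ n 0} := fun f hf =>
    shift_mem hU₁ e he₁ (by intro n hn; simp at hn ⊢; omega) hf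
  have hU2pos : ∀ f ∈ H, U₂ f ∈ coordSub e {n | 1 ≤ n 1} := fun f hf =>
    shift_mem hU₂ e he₂ (by intro n hn; simp at hn ⊢; omega) hf
  have hd0 : Disjoint {n : Fin 2 → ℤ | n 0 = 0} {n | 1 ≤ n 0} := by
    rw [Set.disjoint_left]; intro n h h'; simp at h h'; omega
  have hd1 : Disjoint {n : Fin 2 → ℤ | n 1 = 0} {n | 1 ≤ n 1} := by
    rw [Set.disjoint_left]; intro n h h'; simp at h h'; omega
  have hκ₁ : ∀ w : Bidisk, ∀ f ∈ H, ⟪κ w, U₁ f⟫_ℂ = conj w.1.1 * ⟪κ w, f⟫_ℂ := fun w f hf => by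
    have h := coordSub_orth e hd0 (hl0 w) (hU1pos f hf)
    rw [← hκl w, inner_sub_left, inner_smul_left, unitary_inner hU₁, sub_eq_zero] at h
    exact h
  have hκ₂ : ∀ w : Bidisk, ∀ f ∈ H, ⟪κ w, U₂ f⟫_ℂ = conj w.1.2 * ⟪κ w, f⟫_ℂ := fun w f hf => by
    have h := coordSub_orth e hd1 (hm0 w) (hU2pos f hf)
    rw [inner_sub_left, inner_smul_left, unitary_inner hU₂, sub_eq_zero] at h
    exact h
  have hκe : ∀ w : Bidisk, ⟪κ w, e 0⟫_ℂ = 1 := fun w => by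
    have h1 : ⟪e 0, U₁ (κ w)⟫_ℂ = 0 :=
      coordSub_orth e hd0 (basis_mem e (by simp)) (hU1pos _ (hκ w))
    have h2 : ⟪e 0, U₂ (l w)⟫_ℂ = 0 :=
      coordSub_orth e hd1 (basis_mem e (by simp)) (hU2pos _ (hlH w))
    have h3 : κ w = w.1.1 • U₁ (κ w) + (w.1.2 • U₂ (l w) + e 0) := by
      rw [← hl w]; rw [add_sub_cancel, ← hκl w]; abel
    rw [← inner_conj_symm, h3, inner_add_right, inner_add_right, inner_smul_right,
      inner_smul_right, h1, h2, inner_self_eq_norm_sq_to_K, e.orthonormal.1]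
    simp
  have hκκ : ∀ w z : Bidisk, (1 - conj w.1.1 * z.1.1) * (1 - conj w.1.2 * z.1.2)
      * ⟪κ w, κ z⟫_ℂ = 1 := fun w z => by
    have h1 : ⟪κ w, κ z⟫_ℂ = z.1.1 * (conj w.1.1 * ⟪κ w, κ z⟫_ℂ) + ⟪κ w, l z⟫_ℂ := by
      rw [← hκ₁ w _ (hκ z), ← hκl z, inner_sub_right, inner_smul_right]; ring
    have h2 : ⟪κ w, l z⟫_ℂ = z.1.2 * (conj w.1.2 * ⟪κ w, l z⟫_ℂ) + 1 := by
      rw [← hκ₂ w _ (hlH z), ← hκe w, ← hl z, inner_sub_right, inner_smul_right]; ring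
    linear_combination (1 - conj w.1.2 * z.1.2) * h1 + h2
  -- the approximating operators
  let M : ℕ → L →L[ℂ] L := fun k => ∑ i ∈ Finset.range (N k), ∑ j ∈ Finset.range (N k),
    conj (c k i j) • (U₁ ^ i * U₂ ^ j)
  have hM : ∀ k, ‖M k‖ ≤ 1 := fun k => by
    refine hvn (N k) (fun i j => conj (c k i j)) fun z h1 h2 => ?_
    have h := hc1 k (conj z.1, conj z.2) (by simpa using h1) (by simpa using h2)
    have h' : polyEval (N k) (fun i j => conj (c k i j)) z
        = conj (polyEval (N k) (c k) (conj z.1, conj z.2)) := by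
      simp [polyEval, map_sum]
    rw [h', RCLike.norm_conj]; exact h
  have hMcomm : ∀ k (T : L →L[ℂ] L), Commute U₁ T → Commute U₂ T → Commute (M k) T :=
    fun k T h1 h2 => Commute.sum_left _ _ _ fun i _ => Commute.sum_left _ _ _ fun j _ =>
      ((h1.pow_left i).mul_left (h2.pow_left j)).smul_left _
  have hpow : ∀ (S : Submodule ℂ L) (U : L →L[ℂ] L), (∀ f ∈ S, U f ∈ S) →
      ∀ (i : ℕ), ∀ f ∈ S, (U ^ i) f ∈ S := fun S U hSU i => by
    induction i with
    | zero => intro f hf; simpa using hf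
    | succ i ih => intro f hf; rw [pow_succ]; exact ih _ (hSU f hf)
  have hMS : ∀ k (S : Submodule ℂ L), (∀ f ∈ S, U₁ f ∈ S) → (∀ f ∈ S, U₂ f ∈ S) →
      ∀ f ∈ S, M k f ∈ S := fun k S h1 h2 f hf => by
    simp only [M, ContinuousLinearMap.sum_apply, ContinuousLinearMap.smul_apply]
    exact S.sum_mem fun i _ => S.sum_mem fun j _ => S.smul_mem _
      (hpow S U₁ h1 i _ (hpow S U₂ h2 j _ hf))
  have hκpow : ∀ (w : Bidisk) (U : L →L[ℂ] L) (t : ℂ), (∀ f ∈ H, U f ∈ H) →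
      (∀ f ∈ H, ⟪κ w, U f⟫_ℂ = conj t * ⟪κ w, f⟫_ℂ) → ∀ i : ℕ, ∀ f ∈ H,
      ⟪κ w, (U ^ i) f⟫_ℂ = conj (t ^ i) * ⟪κ w, f⟫_ℂ := fun w U t hUH h i => by
    induction i with
    | zero => intro f hf; simp
    | succ i ih =>
      intro f hf
      rw [pow_succ]
      change ⟪κ w, (U ^ i) (U f)⟫_ℂ = _
      rw [ih _ (hUH f hf), h f hf, pow_succ, map_mul]; ring
  have hκMk : ∀ k (w : Bidisk), ∀ f ∈ H,
      ⟪κ w, M k f⟫_ℂ = conj (polyEval (N k) (c k) w) * ⟪κ w, f⟫_ℂ := fun k w f hf => by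
    simp only [M, ContinuousLinearMap.sum_apply, ContinuousLinearMap.smul_apply, inner_sum,
      inner_smul_right, polyEval, map_sum, Finset.sum_mul]
    refine Finset.sum_congr rfl fun i _ => Finset.sum_congr rfl fun j _ => ?_
    change _ * ⟪κ w, (U₁ ^ i) ((U₂ ^ j) f)⟫_ℂ = _
    rw [hκpow w U₁ w.1.1 hH₁ (hκ₁ w) i _ (hpow H U₂ hH₂ j f hf),
      hκpow w U₂ w.1.2 hH₂ (hκ₂ w) j f hf, map_mul, map_mul]
    ring
  -- the limit
  obtain ⟨T, hT, hTlim⟩ := weak_limit M hM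
  have hTcomm : ∀ V : L →L[ℂ] L, (∀ k, Commute (M k) V) → Commute T V := fun V hV => by
    refine ContinuousLinearMap.ext fun y => ext_inner_left ℂ fun x => ?_
    change ⟪x, T (V y)⟫_ℂ = ⟪x, V (T y)⟫_ℂ
    rw [← ContinuousLinearMap.adjoint_inner_left V]
    refine tendsto_nhds_unique (hTlim x (V y)) ?_
    refine (hTlim (ContinuousLinearMap.adjoint V x) y).congr fun k => ?_
    rw [ContinuousLinearMap.adjoint_inner_left]
    exact congrArg (fun S : L →L[ℂ] L => ⟪x, S y⟫_ℂ) (hV k).symm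
  have hTS : ∀ A : Set (Fin 2 → ℤ), (∀ k, ∀ f ∈ coordSub e A, M k f ∈ coordSub e A) →
      ∀ f ∈ coordSub e A, T f ∈ coordSub e A := fun A hA f hf n hn => by
    refine tendsto_nhds_unique (hTlim (e n) f) ?_
    refine tendsto_const_nhds.congr fun k => ?_
    exact (hA k f hf n hn).symm
  have hTκ : ∀ w : Bidisk, ∀ f ∈ H, ⟪κ w, T f⟫_ℂ = conj (φ w) * ⟪κ w, f⟫_ℂ := fun w f hf => by
    refine tendsto_nhds_unique (hTlim (κ w) f) ?_
    have h1 : Tendsto (fun k => polyEval (N k) (c k) w) (hyperfilter ℕ : Filter ℕ) (𝓝 (φ w)) :=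
      (hc2 w w.2).mono_left (by rw [← Nat.cofinite_eq_atTop]; exact hyperfilter_le_cofinite)
    refine (((Complex.continuous_conj.tendsto _).comp h1).mul_const ⟪κ w, f⟫_ℂ).congr fun k => ?_
    exact (hκMk k w f hf).symm
  obtain ⟨a, b, hab⟩ := scatter (φ := φ) U₁ U₂ T hU₁ hU₂ hT
    (hTcomm U₁ fun k => hMcomm k U₁ (Commute.refl _) hcomm.symm)
    (hTcomm U₂ fun k => hMcomm k U₂ hcomm (Commute.refl _)) H R hHc hH₁ hHR hR₁ hR₂
    (hTS _ fun k => hMS k H hH₁ hH₂) (hTS _ fun k => hMS k R hR₁' hR₂) hPU κ hκ hκ₁ hκ₂ hTκ hκκ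
  exact ⟨WithLp 2 (L × L), inferInstance, inferInstance, inferInstance, a, b, hab⟩

end Model

section Lurking

open Filter Topology
open scoped ComplexConjugate InnerProductSpace ENNReal

/-- Equal Gram matrices give a partial isometry, with a defect operator. -/
theorem lurking {L : Type*} [NormedAddCommGroup L] [InnerProductSpace ℂ L] [CompleteSpace L]
    {ι : Type*} (α β : ι → L) (h : ∀ i j, ⟪α i, α j⟫_ℂ = ⟪β i, β j⟫_ℂ) :
    ∃ T Q : L →L[ℂ] L, (∀ x, ‖T x‖ ^ 2 + ‖Q x‖ ^ 2 = ‖x‖ ^ 2) ∧ (∀ i, T (α i) = β i) ∧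
      ∀ i, Q (α i) = 0 := by
  set ea : (ι →₀ ℂ) →ₗ[ℂ] L := Finsupp.linearCombination ℂ α with hea
  set fb : (ι →₀ ℂ) →ₗ[ℂ] L := Finsupp.linearCombination ℂ β with hfb
  have hnorm : ∀ x, ‖fb x‖ = ‖ea x‖ := fun x => by
    have h1 : ⟪ea x, ea x⟫_ℂ = ⟪fb x, fb x⟫_ℂ := by
      simp only [hea, hfb, Finsupp.linearCombination_apply, Finsupp.sum, sum_inner, inner_sum,
        inner_smul_left, inner_smul_right, h]
    rw [inner_self_eq_norm_sq_to_K, inner_self_eq_norm_sq_to_K] at h1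
    have h2 : ‖ea x‖ ^ 2 = ‖fb x‖ ^ 2 := by exact_mod_cast h1
    exact ((sq_eq_sq₀ (norm_nonneg _) (norm_nonneg _)).1 h2).symm
  set S : Submodule ℂ L := (LinearMap.range ea).topologicalClosure with hS
  have hSc : IsClosed (S : Set L) := Submodule.isClosed_topologicalClosure _
  have : CompleteSpace S := hSc.completeSpace_coe
  have hmem : ∀ x, ea x ∈ S := fun x =>
    Submodule.le_topologicalClosure _ (LinearMap.mem_range_self ea x)
  let e' : (ι →₀ ℂ) →ₗ[ℂ] S := ea.codRestrict S hmem
  have hdense : DenseRange e' := by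
    intro y
    rw [Metric.mem_closure_iff]
    intro ε hε
    have hy : (y : L) ∈ closure (LinearMap.range ea : Set L) := y.2
    obtain ⟨_, ⟨x, rfl⟩, hx⟩ := Metric.mem_closure_iff.1 hy ε hε
    exact ⟨e' x, ⟨x, rfl⟩, hx⟩
  have hbd : ∃ C : ℝ, ∀ x, ‖fb x‖ ≤ C * ‖e' x‖ := ⟨1, fun x => by
    rw [one_mul, hnorm]; exact le_rfl⟩
  let T0 : S →L[ℂ] L := fb.extendOfNorm e'
  have hT0 : ∀ x, T0 (e' x) = fb x := fun x => LinearMap.extendOfNorm_eq hdense hbd x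
  have hT0n : ∀ y, ‖T0 y‖ = ‖y‖ := by
    intro y
    refine hdense.induction_on (p := fun y => ‖T0 y‖ = ‖y‖) y
      (isClosed_eq (by fun_prop) (by fun_prop)) fun x => ?_
    rw [hT0, hnorm]; rfl
  have hα : ∀ i, ea (Finsupp.single i 1) = α i := fun i => by simp [hea]
  have hβ : ∀ i, fb (Finsupp.single i 1) = β i := fun i => by simp [hfb]
  have hαS : ∀ i, α i ∈ S := fun i => by rw [← hα]; exact hmem _
  refine ⟨T0.comp S.orthogonalProjection, Sᗮ.starProjection, fun x => ?_, fun i => ?_,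
    fun i => ?_⟩
  · rw [ContinuousLinearMap.comp_apply, hT0n]
    have := S.norm_sq_eq_add_norm_sq_starProjection x
    rw [this]
    rfl
  · rw [ContinuousLinearMap.comp_apply, ← hβ, ← hT0]
    congr 1
    have : e' (Finsupp.single i 1) = ⟨α i, hαS i⟩ := Subtype.ext (hα i)
    rw [this]
    exact Submodule.orthogonalProjection_mem_subspace_eq_self (K := S) ⟨α i, hαS i⟩
  · rw [Submodule.starProjection_orthogonal_apply_eq_zero (hαS i)]

/-- A Hilbert space absorbing one more copy of `L` isometrically. -/
theorem absorb (L : Type) [NormedAddCommGroup L] [InnerProductSpace ℂ L] [CompleteSpace L] :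
    ∃ (G : Type) (_ : NormedAddCommGroup G) (_ : InnerProductSpace ℂ G) (_ : CompleteSpace G)
      (F : L × G →L[ℂ] G), ∀ x g, ‖F (x, g)‖ ^ 2 = ‖x‖ ^ 2 + ‖g‖ ^ 2 := by
  have hsum : ∀ (g : lp (fun _ : ℕ => L) 2), HasSum (fun n => ‖g n‖ ^ 2) (‖g‖ ^ 2) := fun g => by
    have := lp.hasSum_norm (p := 2) (by norm_num) g
    simpa using this
  let cons : L → (ℕ → L) → ℕ → L := fun x g n => Nat.casesOn n x g
  have hcs : ∀ x (g : lp (fun _ : ℕ => L) 2),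
      HasSum (fun n => ‖cons x g n‖ ^ 2) (‖x‖ ^ 2 + ‖g‖ ^ 2) := fun x g => by
    have h := hsum g
    rw [← hasSum_nat_add_iff' 1]
    simpa [cons] using h
  have hmem : ∀ x (g : lp (fun _ : ℕ => L) 2), Memℓp (cons x g) 2 := fun x g => by
    refine memℓp_gen ?_
    simpa using (hcs x g).summable
  let F0 : L × lp (fun _ : ℕ => L) 2 →ₗ[ℂ] lp (fun _ : ℕ => L) 2 :=
    { toFun := fun p => ⟨cons p.1 p.2, hmem p.1 p.2⟩
      map_add' := fun p q => by
        ext n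
        cases n <;> rfl
      map_smul' := fun c p => by
        ext n
        cases n <;> rfl }
  have hF0 : ∀ p, ‖F0 p‖ ^ 2 = ‖p.1‖ ^ 2 + ‖p.2‖ ^ 2 := fun p =>
    (hsum (F0 p)).unique (hcs p.1 p.2)
  refine ⟨lp (fun _ : ℕ => L) 2, inferInstance, inferInstance, inferInstance,
    F0.mkContinuous 2 (fun p => ?_), fun x g => hF0 (x, g)⟩
  have h1 := hF0 p
  have h2 : ‖p.1‖ ≤ ‖p‖ := norm_fst_le p
  have h3 : ‖p.2‖ ≤ ‖p‖ := norm_snd_le p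
  have h4 := norm_nonneg p.1
  have h5 := norm_nonneg p.2
  have h6 := norm_nonneg p
  refine abs_le_of_sq_le_sq' ?_ (by positivity) |>.2
  rw [h1]
  nlinarith

variable {E F G : Type*} [NormedAddCommGroup E] [InnerProductSpace ℂ E]
  [NormedAddCommGroup F] [InnerProductSpace ℂ F] [NormedAddCommGroup G] [NormedSpace ℂ G]

/-- First projection from the `ℓ²` sum. -/
noncomputable def wfst (E F : Type*) [NormedAddCommGroup E] [InnerProductSpace ℂ E]
    [NormedAddCommGroup F] [InnerProductSpace ℂ F] : WithLp 2 (E × F) →L[ℂ] E :=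
  (ContinuousLinearMap.fst ℂ E F).comp
    ((WithLp.prodContinuousLinearEquiv 2 ℂ E F) : WithLp 2 (E × F) →L[ℂ] E × F)

/-- Second projection from the `ℓ²` sum. -/
noncomputable def wsnd (E F : Type*) [NormedAddCommGroup E] [InnerProductSpace ℂ E]
    [NormedAddCommGroup F] [InnerProductSpace ℂ F] : WithLp 2 (E × F) →L[ℂ] F :=
  (ContinuousLinearMap.snd ℂ E F).comp
    ((WithLp.prodContinuousLinearEquiv 2 ℂ E F) : WithLp 2 (E × F) →L[ℂ] E × F)

/-- Pairing into the `ℓ²` sum. -/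
noncomputable def wpair (f : G →L[ℂ] E) (g : G →L[ℂ] F) : G →L[ℂ] WithLp 2 (E × F) :=
  ((WithLp.prodContinuousLinearEquiv 2 ℂ E F).symm : E × F →L[ℂ] WithLp 2 (E × F)).comp
    (f.prod g)

lemma wfst_apply (x : WithLp 2 (E × F)) : wfst E F x = x.fst := rfl
lemma wsnd_apply (x : WithLp 2 (E × F)) : wsnd E F x = x.snd := rfl
lemma wpair_apply (f : G →L[ℂ] E) (g : G →L[ℂ] F) (x : G) :
    wpair f g x = WithLp.toLp 2 (f x, g x) := rfl
lemma diagBlockOp_apply (a b : ℂ) (x : WithLp 2 (E × F)) :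
    diagBlockOp E F a b x = WithLp.toLp 2 (a • x.fst, b • x.snd) := rfl

lemma diagBlockOp_norm (a b : ℂ) : ‖diagBlockOp E F a b‖ ≤ max ‖a‖ ‖b‖ := by
  have hm : 0 ≤ max ‖a‖ ‖b‖ := le_max_of_le_left (norm_nonneg a)
  refine ContinuousLinearMap.opNorm_le_bound _ hm fun x => ?_
  refine abs_le_of_sq_le_sq' ?_ (by positivity) |>.2
  rw [diagBlockOp_apply, mul_pow, WithLp.prod_norm_sq_eq_of_L2, WithLp.prod_norm_sq_eq_of_L2]
  simp only [WithLp.toLp_fst, WithLp.toLp_snd, norm_smul, mul_pow, mul_add]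
  gcongr
  · exact le_max_left _ _
  · exact le_max_right _ _

variable [CompleteSpace E] [CompleteSpace F]

lemma block_isUnit {A : ℂ} {B : WithLp 2 (E × F) →L[ℂ] ℂ} {C : WithLp 2 (E × F)}
    {D : WithLp 2 (E × F) →L[ℂ] WithLp 2 (E × F)}
    (hV : ∀ (c : ℂ) (h : WithLp 2 (E × F)),
        ‖A * c + B h‖ ^ 2 + ‖c • C + D h‖ ^ 2 = ‖c‖ ^ 2 + ‖h‖ ^ 2)
    {lam : ℂ × ℂ} (hl : lam ∈ Bidisk) :
    IsUnit (1 - D.comp (diagBlockOp E F lam.1 lam.2)) := by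
  have hD : ‖D‖ ≤ 1 := by
    refine ContinuousLinearMap.opNorm_le_bound _ zero_le_one fun h => ?_
    have := hV 0 h
    simp only [mul_zero, zero_add, zero_smul, norm_zero] at this
    rw [one_mul]
    refine abs_le_of_sq_le_sq' ?_ (by positivity) |>.2
    nlinarith [sq_nonneg ‖B h‖]
  refine isUnit_one_sub_of_norm_lt_one ?_
  calc ‖D.comp (diagBlockOp E F lam.1 lam.2)‖ ≤ ‖D‖ * ‖diagBlockOp E F lam.1 lam.2‖ :=
        ContinuousLinearMap.opNorm_comp_le _ _
    _ ≤ 1 * max ‖lam.1‖ ‖lam.2‖ := by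
        gcongr
        exact diagBlockOp_norm _ _
    _ < 1 := by rw [one_mul]; exact max_lt hl.1 hl.2

end Lurking

section Final

open Filter Topology
open scoped ComplexConjugate InnerProductSpace

lemma inverse_apply_of_eq {X : Type*} [NormedAddCommGroup X] [NormedSpace ℂ X]
    {T : X →L[ℂ] X} (hT : IsUnit T) {x y : X} (h : T x = y) : Ring.inverse T y = x := by
  have h1 : (Ring.inverse T * T) x = x := by rw [Ring.inverse_mul_cancel _ hT]; rfl
  rw [← h]; exact h1

lemma apply_inverse {X : Type*} [NormedAddCommGroup X] [NormedSpace ℂ X]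
    {T : X →L[ℂ] X} (hT : IsUnit T) (y : X) : T (Ring.inverse T y) = y := by
  have h1 : (T * Ring.inverse T) y = y := by rw [Ring.mul_inverse_cancel _ hT]; rfl
  exact h1

lemma nsq {E F : Type*} [NormedAddCommGroup E] [InnerProductSpace ℂ E]
    [NormedAddCommGroup F] [InnerProductSpace ℂ F] (x : E) (y : F) :
    ‖(WithLp.toLp 2 (x, y) : WithLp 2 (E × F))‖ ^ 2 = ‖x‖ ^ 2 + ‖y‖ ^ 2 :=
  WithLp.prod_norm_sq_eq_of_L2 _

theorem realization_of_decomposition (φ : ℂ × ℂ → ℂ) (K : Type) [NormedAddCommGroup K]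
    [InnerProductSpace ℂ K] [CompleteSpace K] (a b : Bidisk → K)
    (hab : ∀ w z : Bidisk,
      1 - conj (φ w) * φ z = (1 - conj w.1.1 * z.1.1) * ⟪b w, b z⟫_ℂ
        + (1 - conj w.1.2 * z.1.2) * ⟪a w, a z⟫_ℂ) :
    ∃ (H₁ H₂ : Type) (_ : NormedAddCommGroup H₁) (_ : InnerProductSpace ℂ H₁)
      (_ : CompleteSpace H₁) (_ : NormedAddCommGroup H₂) (_ : InnerProductSpace ℂ H₂)
      (_ : CompleteSpace H₂)
      (A : ℂ) (B : WithLp 2 (H₁ × H₂) →L[ℂ] ℂ) (C : WithLp 2 (H₁ × H₂))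
      (D : WithLp 2 (H₁ × H₂) →L[ℂ] WithLp 2 (H₁ × H₂)),
      (∀ (c : ℂ) (h : WithLp 2 (H₁ × H₂)),
        ‖A * c + B h‖ ^ 2 + ‖c • C + D h‖ ^ 2 = ‖c‖ ^ 2 + ‖h‖ ^ 2) ∧
      ∀ lam ∈ Bidisk,
        IsUnit (1 - D.comp (diagBlockOp H₁ H₂ lam.1 lam.2)) ∧
        φ lam = A + B ((diagBlockOp H₁ H₂ lam.1 lam.2)
          ((Ring.inverse (1 - D.comp (diagBlockOp H₁ H₂ lam.1 lam.2))) C)) := by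
  let α : Bidisk → WithLp 2 (ℂ × WithLp 2 (K × K)) := fun w =>
    WithLp.toLp 2 (1, WithLp.toLp 2 (w.1.1 • b w, w.1.2 • a w))
  let β : Bidisk → WithLp 2 (ℂ × WithLp 2 (K × K)) := fun w =>
    WithLp.toLp 2 (φ w, WithLp.toLp 2 (b w, a w))
  obtain ⟨T, Q, hTQ, hTα, hQα⟩ := lurking α β (fun w z => by
    simp only [α, β, WithLp.prod_inner_apply, inner_smul_left, inner_smul_right,
      RCLike.inner_apply, map_one, mul_one]
    linear_combination hab w z)
  obtain ⟨G, _, _, _, F, hF⟩ := absorb (WithLp 2 (ℂ × WithLp 2 (K × K)))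
  let H := WithLp 2 (WithLp 2 (K × G) × K)
  let p1 : ℂ × H →L[ℂ] ℂ := ContinuousLinearMap.fst ℂ ℂ H
  let p2 : ℂ × H →L[ℂ] H := ContinuousLinearMap.snd ℂ ℂ H
  let q1 : H →L[ℂ] K := (wfst K G).comp (wfst (WithLp 2 (K × G)) K)
  let qg : H →L[ℂ] G := (wsnd K G).comp (wfst (WithLp 2 (K × G)) K)
  let q2 : H →L[ℂ] K := wsnd (WithLp 2 (K × G)) K
  let W : ℂ × H →L[ℂ] WithLp 2 (ℂ × WithLp 2 (K × K)) :=
    wpair p1 (wpair (q1.comp p2) (q2.comp p2))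
  let r1 : WithLp 2 (ℂ × WithLp 2 (K × K)) →L[ℂ] K :=
    (wfst K K).comp (wsnd ℂ (WithLp 2 (K × K)))
  let r2 : WithLp 2 (ℂ × WithLp 2 (K × K)) →L[ℂ] K :=
    (wsnd K K).comp (wsnd ℂ (WithLp 2 (K × K)))
  let F1 : ℂ × H →L[ℂ] ℂ := (wfst ℂ (WithLp 2 (K × K))).comp (T.comp W)
  let F2 : ℂ × H →L[ℂ] H := wpair
    (wpair (r1.comp (T.comp W)) (F.comp ((Q.comp W).prod (qg.comp p2)))) (r2.comp (T.comp W))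
  have hF1 : ∀ c h, F1 (1, 0) * c + (F1.comp (ContinuousLinearMap.inr ℂ ℂ H)) h = F1 (c, h) :=
    fun c h => by
      have : ((c, h) : ℂ × H) = c • ((1, 0) : ℂ × H) + (0, h) := by simp
      rw [this, map_add, map_smul, smul_eq_mul, mul_comm]; rfl
  have hF2 : ∀ c h, c • F2 (1, 0) + (F2.comp (ContinuousLinearMap.inr ℂ ℂ H)) h = F2 (c, h) :=
    fun c h => by
      have : ((c, h) : ℂ × H) = c • ((1, 0) : ℂ × H) + (0, h) := by simp
      rw [this, map_add, map_smul]; rfl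
  have hiso : ∀ (c : ℂ) (h : H), ‖F1 (1, 0) * c + (F1.comp (ContinuousLinearMap.inr ℂ ℂ H)) h‖ ^ 2
      + ‖c • F2 (1, 0) + (F2.comp (ContinuousLinearMap.inr ℂ ℂ H)) h‖ ^ 2
      = ‖c‖ ^ 2 + ‖h‖ ^ 2 := fun c h => by
    rw [hF1, hF2]
    have e1 : F1 (c, h) = (T (W (c, h))).fst := rfl
    have e2 : F2 (c, h) = WithLp.toLp 2 (WithLp.toLp 2 ((T (W (c, h))).snd.fst,
      F (Q (W (c, h)), h.fst.snd)), (T (W (c, h))).snd.snd) := rfl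
    have e3 : W (c, h) = WithLp.toLp 2 (c, WithLp.toLp 2 (h.fst.fst, h.snd)) := rfl
    have h1 := hTQ (W (c, h))
    have h2 := hF (Q (W (c, h))) h.fst.snd
    have h3 : ‖W (c, h)‖ ^ 2 = ‖c‖ ^ 2 + (‖h.fst.fst‖ ^ 2 + ‖h.snd‖ ^ 2) := by
      rw [e3, nsq, nsq]
    have h4 : ‖h‖ ^ 2 = ‖h.fst.fst‖ ^ 2 + ‖h.fst.snd‖ ^ 2 + ‖h.snd‖ ^ 2 := by
      rw [WithLp.prod_norm_sq_eq_of_L2, WithLp.prod_norm_sq_eq_of_L2 h.fst]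
    have h5 : ‖T (W (c, h))‖ ^ 2 = ‖(T (W (c, h))).fst‖ ^ 2 + (‖(T (W (c, h))).snd.fst‖ ^ 2
        + ‖(T (W (c, h))).snd.snd‖ ^ 2) := by
      rw [WithLp.prod_norm_sq_eq_of_L2, WithLp.prod_norm_sq_eq_of_L2 (T (W (c, h))).snd]
    rw [e1, e2, nsq, nsq]
    linarith
  refine ⟨WithLp 2 (K × G), K, inferInstance, inferInstance, inferInstance, inferInstance,
    inferInstance, inferInstance, F1 (1, 0), F1.comp (ContinuousLinearMap.inr ℂ ℂ H), F2 (1, 0),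
    F2.comp (ContinuousLinearMap.inr ℂ ℂ H), hiso, fun lam hl => ?_⟩
  have hu := block_isUnit hiso hl
  refine ⟨hu, ?_⟩
  let w : Bidisk := ⟨lam, hl⟩
  let u : H := WithLp.toLp 2 (WithLp.toLp 2 (b w, 0), a w)
  let Eu : H := diagBlockOp (WithLp 2 (K × G)) K lam.1 lam.2 u
  have hEu : Eu = WithLp.toLp 2 (WithLp.toLp 2 (lam.1 • b w, 0), lam.2 • a w) := by
    simp only [Eu, u, diagBlockOp_apply, WithLp.toLp_fst, WithLp.toLp_snd, ← WithLp.toLp_smul,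
      Prod.smul_mk, smul_zero]
  have hW : W (1, Eu) = α w := by rw [hEu]; rfl
  have hv1 : F1 (1, Eu) = φ lam := by
    change (T (W (1, Eu))).fst = _
    rw [hW, hTα]; rfl
  have hv2 : F2 (1, Eu) = u := by
    change WithLp.toLp 2 (WithLp.toLp 2 ((T (W (1, Eu))).snd.fst,
      F (Q (W (1, Eu)), Eu.fst.snd)), (T (W (1, Eu))).snd.snd) = _
    have hz : Eu.fst.snd = 0 := by rw [hEu]; rfl
    have hF0 : F ((0 : WithLp 2 (ℂ × WithLp 2 (K × K))), (0 : G)) = 0 := F.map_zero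
    rw [hW, hTα, hQα, hz, hF0]; rfl
  have hinv := inverse_apply_of_eq hu (x := u) (y := F2 (1, 0)) (by
    change u - (F2.comp (ContinuousLinearMap.inr ℂ ℂ H)) Eu = _
    have := hF2 1 Eu
    rw [one_smul, hv2] at this
    rw [← this]
    abel)
  rw [hinv]
  have := hF1 1 Eu
  rw [mul_one, hv1] at this
  exact this.symm

theorem of_realization (φ : ℂ × ℂ → ℂ) {E F : Type*} [NormedAddCommGroup E]
    [InnerProductSpace ℂ E] [NormedAddCommGroup F] [InnerProductSpace ℂ F] [CompleteSpace E]
    [CompleteSpace F] {A : ℂ} {B : WithLp 2 (E × F) →L[ℂ] ℂ} {C : WithLp 2 (E × F)}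
    {D : WithLp 2 (E × F) →L[ℂ] WithLp 2 (E × F)}
    (hV : ∀ (c : ℂ) (h : WithLp 2 (E × F)),
        ‖A * c + B h‖ ^ 2 + ‖c • C + D h‖ ^ 2 = ‖c‖ ^ 2 + ‖h‖ ^ 2)
    (hφ : ∀ lam ∈ Bidisk, φ lam = A + B ((diagBlockOp E F lam.1 lam.2)
          ((Ring.inverse (1 - D.comp (diagBlockOp E F lam.1 lam.2))) C))) :
    DifferentiableOn ℂ φ Bidisk ∧ ∀ lam ∈ Bidisk, ‖φ lam‖ ≤ 1 := by
  constructor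
  · refine DifferentiableOn.congr ?_ hφ
    have hE : ∀ lam : ℂ × ℂ, diagBlockOp E F lam.1 lam.2 =
        lam.1 • diagBlockOp E F 1 0 + lam.2 • diagBlockOp E F 0 1 := fun lam => by
      ext x
      simp only [diagBlockOp_apply, _root_.add_apply, _root_.smul_apply, ← WithLp.toLp_smul,
        ← WithLp.toLp_add]
      simp
    have hEd : Differentiable ℂ (fun lam : ℂ × ℂ => diagBlockOp E F lam.1 lam.2) := by
      simp_rw [hE]
      fun_prop
    intro lam hl
    refine DifferentiableAt.differentiableWithinAt ?_
    obtain ⟨u, hu⟩ := block_isUnit hV hl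
    have h1 : DifferentiableAt ℂ (fun lam : ℂ × ℂ => 1 - D.comp (diagBlockOp E F lam.1 lam.2))
        lam := by
      refine (differentiableAt_const _).sub ?_
      exact (differentiableAt_const D).clm_comp (hEd lam)
    have h2 : DifferentiableAt ℂ (fun lam : ℂ × ℂ =>
        Ring.inverse (1 - D.comp (diagBlockOp E F lam.1 lam.2))) lam := by
      refine DifferentiableAt.comp lam (g := Ring.inverse) ?_ h1
      rw [← hu]
      exact differentiableAt_inverse u.isUnit
    refine (differentiableAt_const A).add ?_
    exact B.differentiableAt.comp lam
      ((hEd lam).clm_apply (h2.clm_apply (differentiableAt_const C)))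
  · intro lam hl
    have hu := block_isUnit hV hl
    set h := Ring.inverse (1 - D.comp (diagBlockOp E F lam.1 lam.2)) C with hh
    have h1 : h - D (diagBlockOp E F lam.1 lam.2 h) = C := apply_inverse hu C
    have h2 := hV 1 (diagBlockOp E F lam.1 lam.2 h)
    rw [mul_one, one_smul, ← hφ lam hl] at h2
    have h3 : C + D (diagBlockOp E F lam.1 lam.2 h) = h := by
      rw [← h1, sub_add_cancel]
    rw [h3, norm_one] at h2
    have h4 : ‖diagBlockOp E F lam.1 lam.2 h‖ ≤ ‖h‖ := by
      have := (diagBlockOp E F lam.1 lam.2).le_of_opNorm_le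
        ((diagBlockOp_norm lam.1 lam.2).trans (max_le hl.1.le hl.2.le)) h
      rwa [one_mul] at this
    have h5 := norm_nonneg (diagBlockOp E F lam.1 lam.2 h)
    refine abs_le_of_sq_le_sq' ?_ zero_le_one |>.2
    nlinarith

end Final

/-- **Realization formula on the bidisk (Agler).** A function `φ : 𝔻² → ℂ` is analytic with
`sup_{λ∈𝔻²} |φ(λ)| ≤ 1` if and only if there are complex Hilbert spaces `H₁, H₂` and an
isometry `V : ℂ ⊕ H → ℂ ⊕ H` of `H = H₁ ⊕ H₂`, with block decomposition
`V(c,h) = (A c + B h, c • C + D h)`, such that, with `E_λ = λ¹ I_{H₁} ⊕ λ² I_{H₂}`, for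
every `λ ∈ 𝔻²` the operator `I_H - D E_λ` is invertible and
`φ(λ) = A + B E_λ (I_H - D E_λ)⁻¹ C`. -/
theorem realization_formula_bidisk (φ : ℂ × ℂ → ℂ) :
    (DifferentiableOn ℂ φ Bidisk ∧ ∀ lam ∈ Bidisk, ‖φ lam‖ ≤ 1) ↔
    ∃ (H₁ H₂ : Type) (_ : NormedAddCommGroup H₁) (_ : InnerProductSpace ℂ H₁)
      (_ : CompleteSpace H₁) (_ : NormedAddCommGroup H₂) (_ : InnerProductSpace ℂ H₂)
      (_ : CompleteSpace H₂)
      (A : ℂ) (B : WithLp 2 (H₁ × H₂) →L[ℂ] ℂ) (C : WithLp 2 (H₁ × H₂))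
      (D : WithLp 2 (H₁ × H₂) →L[ℂ] WithLp 2 (H₁ × H₂)),
      -- `V(c, h) = (A * c + B h, c • C + D h)` is an isometry of `ℂ ⊕ H₁ ⊕ H₂`
      (∀ (c : ℂ) (h : WithLp 2 (H₁ × H₂)),
        ‖A * c + B h‖ ^ 2 + ‖c • C + D h‖ ^ 2 = ‖c‖ ^ 2 + ‖h‖ ^ 2) ∧
      ∀ lam ∈ Bidisk,
        IsUnit (1 - D.comp (diagBlockOp H₁ H₂ lam.1 lam.2)) ∧
        φ lam = A + B ((diagBlockOp H₁ H₂ lam.1 lam.2)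
          ((Ring.inverse (1 - D.comp (diagBlockOp H₁ H₂ lam.1 lam.2))) C)) := by
  constructor
  · rintro ⟨hd, hb⟩
    obtain ⟨K, _, _, _, a, b, hab⟩ := agler_decomposition φ hd hb
    exact realization_of_decomposition φ K a b hab
  · rintro ⟨H₁, H₂, _, _, _, _, _, _, A, B, C, D, hV, h⟩
    exact of_realization φ hV fun lam hl => (h lam hl).2
end

section
/- (von Neumann's inequality) Let T be a bounded linear operator on a complex Hilbert space with ‖T‖ ≤ 1, and let p be a polynomial with complex coefficients. Then ‖p(T)‖ ≤ sup_{|z| ≤ 1} |p(z)|. -/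
open Metric Polynomial

theorem vN_unitary {E : Type*} [NormedAddCommGroup E] [InnerProductSpace ℂ E] [CompleteSpace E]
    (U : E →L[ℂ] E) (hU : U ∈ unitary (E →L[ℂ] E)) (p : ℂ[X]) (M : ℝ) (hM : 0 ≤ M)
    (h : ∀ z ∈ closedBall (0 : ℂ) 1, ‖p.eval z‖ ≤ M) : ‖aeval U p‖ ≤ M := by
  have hn : IsStarNormal U := by
    constructor
    rw [commute_iff_eq, Unitary.star_mul_self_of_mem hU, Unitary.mul_star_self_of_mem hU]
  rw [← cfc_polynomial (R := ℂ) p U]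
  refine norm_cfc_le hM fun x hx => h x ?_
  exact sphere_subset_closedBall (spectrum.subset_circle_of_unitary hU hx)

theorem vN_defect {H : Type*} [NormedAddCommGroup H] [InnerProductSpace ℂ H] [CompleteSpace H]
    (T : H →L[ℂ] H) (hT : ‖T‖ ≤ 1) : ∃ D : H →L[ℂ] H, ∀ v, ‖D v‖ ^ 2 = ‖v‖ ^ 2 - ‖T v‖ ^ 2 := by
  have key : ∀ v, inner ℂ v ((1 - star T * T) v) = ((‖v‖ ^ 2 - ‖T v‖ ^ 2 : ℝ) : ℂ) := by
    intro v
    simp [ContinuousLinearMap.star_eq_adjoint, inner_sub_right,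
      ContinuousLinearMap.adjoint_inner_right, inner_self_eq_norm_sq_to_K]
  have hpos : 0 ≤ 1 - star T * T := by
    rw [sub_nonneg]
    exact (CStarAlgebra.star_mul_le_algebraMap_norm_sq (a := T)).trans (by
      rw [← map_one (algebraMap ℝ (H →L[ℂ] H))]
      exact algebraMap_mono _ (pow_le_one₀ (norm_nonneg _) hT))
  refine ⟨CFC.sqrt (1 - star T * T), fun v => ?_⟩
  have hs : star (CFC.sqrt (1 - star T * T)) = CFC.sqrt (1 - star T * T) :=
    (CFC.sqrt_nonneg _).isSelfAdjoint
  have h1 : inner ℂ v ((CFC.sqrt (1 - star T * T) * CFC.sqrt (1 - star T * T)) v)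
      = ((‖CFC.sqrt (1 - star T * T) v‖ ^ 2 : ℝ) : ℂ) := by
    nth_rw 1 [← hs]
    simp only [ContinuousLinearMap.mul_apply, ContinuousLinearMap.star_eq_adjoint,
      ContinuousLinearMap.adjoint_inner_right, inner_self_eq_norm_sq_to_K]
    simp
  rw [CFC.sqrt_mul_sqrt_self _ hpos, key] at h1
  exact_mod_cast h1.symm

theorem vN_finite {H : Type*} [NormedAddCommGroup H] [InnerProductSpace ℂ H] [CompleteSpace H]
    (T D : H →L[ℂ] H) (hD : ∀ v, ‖D v‖ ^ 2 = ‖v‖ ^ 2 - ‖T v‖ ^ 2) (p : ℂ[X]) (M : ℝ) (hM : 0 ≤ M)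
    (h : ∀ z ∈ closedBall (0 : ℂ) 1, ‖p.eval z‖ ≤ M) (v : H) (K : ℕ) :
    ‖aeval T p v‖ ^ 2 - ‖(T ^ K) (aeval T p v)‖ ^ 2 ≤ M ^ 2 * ‖v‖ ^ 2 := by
  have tele : ∀ (w : H) (n : ℕ), ∑ k ∈ Finset.range n, ‖D ((T ^ k) w)‖ ^ 2
      = ‖w‖ ^ 2 - ‖(T ^ n) w‖ ^ 2 := by
    intro w n
    induction n with
    | zero => simp
    | succ n ih =>
      rw [Finset.sum_range_succ, ih, hD, pow_succ' T n, ContinuousLinearMap.mul_apply]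
      ring
  set n := K + p.natDegree with hn
  let e := LinearIsometryEquiv.piLpCongrLeft 2 ℂ H (finRotate (n + 1)).symm
  let U := Unitary.linearIsometryEquiv.symm e
  let x : PiLp 2 (fun _ : Fin (n + 1) => H) := WithLp.toLp 2 fun i => D ((T ^ (i : ℕ)) v)
  have hUa : ∀ (y : PiLp 2 (fun _ : Fin (n + 1) => H)) i,
      (U.1 y) i = y (finRotate (n + 1) i) := fun y i => rfl
  have hpow : ∀ (j : ℕ) (i : Fin (n + 1)), i.1 + j < n + 1 →
      ((U.1 ^ j) x) i = D ((T ^ (i.1 + j)) v) := by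
    intro j
    induction j with
    | zero => intro i _; simp [x]
    | succ j ih =>
      intro i hi
      have h1 : (finRotate (n + 1) i : ℕ) = i + 1 := by
        apply coe_finRotate_of_ne_last
        intro hc
        rw [hc] at hi
        simp at hi
        try omega
      rw [pow_succ', ContinuousLinearMap.mul_apply, hUa, ih _ (by omega), h1]
      congr 3
      omega
  have hp : ∀ i : Fin (n + 1), i.1 < K →
      (aeval U.1 p x) i = D ((T ^ i.1) (aeval T p v)) := by
    intro i hi
    rw [aeval_eq_sum_range, aeval_eq_sum_range]
    simp only [ContinuousLinearMap.sum_apply, ContinuousLinearMap.smul_apply, map_sum, map_smul,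
      WithLp.ofLp_sum, Finset.sum_apply, PiLp.smul_apply]
    refine Finset.sum_congr rfl fun j hj => ?_
    rw [Finset.mem_range] at hj
    rw [hpow j i (by omega), pow_add, ContinuousLinearMap.mul_apply]
  have hx : ‖x‖ ^ 2 ≤ ‖v‖ ^ 2 := by
    rw [PiLp.norm_sq_eq_of_L2]
    have := Fin.sum_univ_eq_sum_range (fun k => ‖D ((T ^ k) v)‖ ^ 2) (n + 1)
    simp only [x]
    rw [this, tele]
    nlinarith [sq_nonneg ‖(T ^ (n + 1)) v‖]
  have hU : ‖aeval U.1 p x‖ ≤ M * ‖x‖ :=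
    (ContinuousLinearMap.le_opNorm _ _).trans
      (mul_le_mul_of_nonneg_right (vN_unitary U.1 U.2 p M hM h) (norm_nonneg _))
  have hlow : ∑ k ∈ Finset.range K, ‖D ((T ^ k) (aeval T p v))‖ ^ 2 ≤ ‖aeval U.1 p x‖ ^ 2 := by
    rw [PiLp.norm_sq_eq_of_L2]
    let g : ℕ → ℝ := fun k => if hk : k < n + 1 then ‖(aeval U.1 p x) ⟨k, hk⟩‖ ^ 2 else 0
    have h2 : ∑ i : Fin (n + 1), ‖(aeval U.1 p x) i‖ ^ 2 = ∑ k ∈ Finset.range (n + 1), g k := by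
      rw [← Fin.sum_univ_eq_sum_range]
      exact Finset.sum_congr rfl fun i _ => by simp only [g, dif_pos i.2]
    rw [h2]
    have h3 : ∑ k ∈ Finset.range K, ‖D ((T ^ k) (aeval T p v))‖ ^ 2
        = ∑ k ∈ Finset.range K, g k := by
      refine Finset.sum_congr rfl fun k hk => ?_
      rw [Finset.mem_range] at hk
      have hk' : k < n + 1 := by omega
      simp only [g, dif_pos hk']
      rw [hp ⟨k, hk'⟩ hk]
    rw [h3]
    refine Finset.sum_le_sum_of_subset_of_nonneg (Finset.range_mono (by omega)) fun k _ _ => ?_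
    simp only [g]
    split_ifs <;> positivity
  rw [tele] at hlow
  calc _ ≤ _ := hlow
    _ ≤ (M * ‖x‖) ^ 2 := by gcongr
    _ = M ^ 2 * ‖x‖ ^ 2 := by ring
    _ ≤ _ := by gcongr

theorem vN_strict {H : Type*} [NormedAddCommGroup H] [InnerProductSpace ℂ H] [CompleteSpace H]
    (T : H →L[ℂ] H) (hT : ‖T‖ < 1) (p : ℂ[X]) (M : ℝ) (hM : 0 ≤ M)
    (h : ∀ z ∈ closedBall (0 : ℂ) 1, ‖p.eval z‖ ≤ M) : ‖aeval T p‖ ≤ M := by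
  obtain ⟨D, hD⟩ := vN_defect T hT.le
  refine ContinuousLinearMap.opNorm_le_bound _ hM fun v => ?_
  have ht : Filter.Tendsto (fun K : ℕ => ‖aeval T p v‖ ^ 2 - ‖(T ^ K) (aeval T p v)‖ ^ 2)
      Filter.atTop (nhds (‖aeval T p v‖ ^ 2 - ‖(0 : H →L[ℂ] H) (aeval T p v)‖ ^ 2)) := by
    have h0 := tendsto_pow_atTop_nhds_zero_of_norm_lt_one hT
    have h1 : Continuous fun S : H →L[ℂ] H => ‖aeval T p v‖ ^ 2 - ‖S (aeval T p v)‖ ^ 2 := by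
      fun_prop
    exact (h1.tendsto 0).comp h0
  have := le_of_tendsto' ht (fun K => vN_finite T D hD p M hM h v K)
  simp only [ContinuousLinearMap.zero_apply, norm_zero] at this
  refine le_of_sq_le_sq ?_ (by positivity)
  nlinarith

/-- **Von Neumann's inequality.** If `T` is a contraction on a complex Hilbert space and `p`
is a polynomial with complex coefficients, then `‖p(T)‖ ≤ sup_{|z| ≤ 1} |p(z)|`. -/
theorem von_neumann_inequality
    {H : Type*} [NormedAddCommGroup H] [InnerProductSpace ℂ H] [CompleteSpace H]
    (T : H →L[ℂ] H) (hT : ‖T‖ ≤ 1) (p : Polynomial ℂ) :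
    ‖Polynomial.aeval T p‖ ≤ sSup ((fun z => ‖p.eval z‖) '' closedBall (0 : ℂ) 1) := by
  set M := sSup ((fun z => ‖p.eval z‖) '' closedBall (0 : ℂ) 1) with hMdef
  have hb : BddAbove ((fun z => ‖p.eval z‖) '' closedBall (0 : ℂ) 1) :=
    ((isCompact_closedBall (0 : ℂ) 1).image p.continuous.norm).bddAbove
  have h : ∀ z ∈ closedBall (0 : ℂ) 1, ‖p.eval z‖ ≤ M := fun z hz =>
    le_csSup hb (Set.mem_image_of_mem _ hz)
  have hM : 0 ≤ M := (norm_nonneg _).trans (h 0 (by simp))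
  have hc : Continuous fun r : ℝ => ‖aeval ((r : ℂ) • T) p‖ :=
    (p.continuous_aeval.comp (by fun_prop : Continuous fun r : ℝ => (r : ℂ) • T)).norm
  have ht : Filter.Tendsto (fun r : ℝ => ‖aeval ((r : ℂ) • T) p‖) (nhdsWithin 1 (Set.Iio 1))
      (nhds ‖aeval T p‖) := by
    have := (hc.tendsto 1).mono_left (nhdsWithin_le_nhds (s := Set.Iio (1 : ℝ)))
    simpa using this
  refine le_of_tendsto ht ?_
  filter_upwards [Ioo_mem_nhdsLT (zero_lt_one' ℝ)] with r hr
  refine vN_strict _ ?_ p M hM h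
  rw [norm_smul, Complex.norm_real, Real.norm_of_nonneg hr.1.le]
  nlinarith [hr.1, hr.2, norm_nonneg T]
end

section
/- (Schwarz lemma on the polydisk) Let d ≥ 1 and let f be analytic on the polydisk 𝔻^d with sup_{λ∈𝔻^d} |f(λ)| ≤ 1. Then for every λ = (λ¹,…,λ^d) ∈ 𝔻^d, ∑_{r=1}^d (1 − |λ^r|²) |∂f/∂λ^r (λ)| ≤ 1 − |f(λ)|². -/
open Finset

/-- The open polydisk `𝔻^d` in `ℂ^d`. -/
def Polydisk (d : ℕ) : Set (Fin d → ℂ) := {lam | ∀ r, ‖lam r‖ < 1}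

lemma aux_mobius (z w : ℂ) (hz : ‖z‖ < 1) (hw : ‖w‖ < 1) :
    1 + (starRingEnd ℂ) w * z ≠ 0 ∧ ‖(z + w) / (1 + (starRingEnd ℂ) w * z)‖ < 1 := by
  have key : ‖z + w‖ ^ 2 + (1 - ‖z‖ ^ 2) * (1 - ‖w‖ ^ 2)
      = ‖1 + (starRingEnd ℂ) w * z‖ ^ 2 := by
    simp only [← Complex.normSq_eq_norm_sq, Complex.normSq_apply, Complex.add_re, Complex.add_im,
      Complex.mul_re, Complex.mul_im, Complex.conj_re, Complex.conj_im, Complex.one_re,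
      Complex.one_im]
    ring
  have h1 : 0 < 1 - ‖z‖ ^ 2 := by nlinarith [norm_nonneg z]
  have h2 : 0 < 1 - ‖w‖ ^ 2 := by nlinarith [norm_nonneg w]
  have h3 := mul_pos h1 h2
  have hlt : ‖z + w‖ < ‖1 + (starRingEnd ℂ) w * z‖ :=
    lt_of_pow_lt_pow_left₀ 2 (norm_nonneg _) (by linarith)
  have hpos : 0 < ‖1 + (starRingEnd ℂ) w * z‖ := lt_of_le_of_lt (norm_nonneg _) hlt
  refine ⟨norm_pos_iff.mp hpos, ?_⟩
  rw [norm_div, div_lt_one hpos]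
  exact hlt

lemma aux_mobius_deriv (w z : ℂ) (h : 1 + (starRingEnd ℂ) w * z ≠ 0) :
    HasDerivAt (fun z => (z + w) / (1 + (starRingEnd ℂ) w * z))
      (((1 - ‖w‖ ^ 2 : ℝ) : ℂ) / (1 + (starRingEnd ℂ) w * z) ^ 2) z := by
  have h1 : HasDerivAt (fun z : ℂ => z + w) 1 z := (hasDerivAt_id z).add_const w
  have h2 : HasDerivAt (fun z : ℂ => 1 + (starRingEnd ℂ) w * z) ((starRingEnd ℂ) w) z := by
    simpa using ((hasDerivAt_id z).const_mul ((starRingEnd ℂ) w)).const_add 1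
  refine (h1.div h2 h).congr_deriv ?_
  have := Complex.conj_mul' w
  push_cast
  rw [← this]
  ring

lemma aux_pick_strict (g : ℂ → ℂ) (hg : DifferentiableOn ℂ g (Metric.ball 0 1))
    (hb : ∀ z ∈ Metric.ball (0 : ℂ) 1, ‖g z‖ < 1) : ‖deriv g 0‖ ≤ 1 - ‖g 0‖ ^ 2 := by
  have h0 : (0 : ℂ) ∈ Metric.ball (0 : ℂ) 1 := by simp
  have hw : ‖-g 0‖ < 1 := by simpa using hb 0 h0
  have hM := fun z hz => aux_mobius (g z) (-g 0) (hb z hz) hw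
  have hnn : 0 < 1 - ‖g 0‖ ^ 2 := by
    have := hb 0 h0
    nlinarith [norm_nonneg (g 0)]
  let m : ℂ → ℂ := fun z => (z + -g 0) / (1 + (starRingEnd ℂ) (-g 0) * z)
  have hm : ∀ z ∈ Metric.ball (0 : ℂ) 1, HasDerivAt m _ (g z) :=
    fun z hz => aux_mobius_deriv (-g 0) (g z) (hM z hz).1
  have hmg : DifferentiableOn ℂ (m ∘ g) (Metric.ball 0 1) := fun z hz =>
    (hm z hz).differentiableAt.comp_differentiableWithinAt z (hg z hz)
  have hc : (m ∘ g) 0 = 0 := by simp [m]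
  have hS := Complex.norm_deriv_le_one_of_mapsTo_ball (f := m ∘ g) (c := 0) (R := 1) hmg
    (by
      intro z hz
      rw [hc]
      have := (hM z hz).2
      simp only [Metric.mem_closedBall, dist_zero_right]
      exact this.le) one_pos
  have hd : HasDerivAt g (deriv g 0) 0 :=
    (hg.differentiableAt (Metric.isOpen_ball.mem_nhds h0)).hasDerivAt
  rw [((hm 0 h0).comp 0 hd).deriv] at hS
  have e : (1 : ℂ) + (starRingEnd ℂ) (-g 0) * g 0 = ((1 - ‖g 0‖ ^ 2 : ℝ) : ℂ) := by
    have := Complex.conj_mul' (g 0)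
    push_cast
    rw [← this, map_neg]
    ring
  rw [e, norm_neg, norm_mul, norm_div, norm_pow, Complex.norm_real, Real.norm_of_nonneg hnn.le,
    sq (1 - ‖g 0‖ ^ 2), div_mul_cancel_left₀ hnn.ne', inv_mul_le_iff₀ hnn] at hS
  linarith

lemma aux_pick (g : ℂ → ℂ) (hg : DifferentiableOn ℂ g (Metric.ball 0 1))
    (hb : ∀ z ∈ Metric.ball (0 : ℂ) 1, ‖g z‖ ≤ 1) : ‖deriv g 0‖ ≤ 1 - ‖g 0‖ ^ 2 := by
  have hs : ∀ s ∈ Set.Ioo (0 : ℝ) 1, s * ‖deriv g 0‖ ≤ 1 - (s * ‖g 0‖) ^ 2 := by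
    rintro s ⟨hs0, hs1⟩
    have := aux_pick_strict (fun z => (s : ℂ) * g z) (hg.const_mul _) (by
      intro z hz
      rw [norm_mul, Complex.norm_real, Real.norm_of_nonneg hs0.le]
      nlinarith [hb z hz])
    have hd : DifferentiableAt ℂ g 0 :=
      hg.differentiableAt (Metric.isOpen_ball.mem_nhds (by simp))
    rwa [deriv_const_mul _ hd, norm_mul, norm_mul, Complex.norm_real,
      Real.norm_of_nonneg hs0.le] at this
  have hcl : (1 : ℝ) ∈ closure (Set.Ioo (0 : ℝ) 1) := by
    rw [closure_Ioo (by norm_num)]; simp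
  have := le_on_closure (s := Set.Ioo (0 : ℝ) 1) (f := fun s => s * ‖deriv g 0‖)
    (g := fun s => 1 - (s * ‖g 0‖) ^ 2) hs (by fun_prop) (by fun_prop) hcl
  simpa using this

lemma aux_phase (w : ℂ) : ∃ c : ℂ, ‖c‖ = 1 ∧ c * w = (‖w‖ : ℂ) := by
  by_cases h : w = 0
  · exact ⟨1, by simp [h]⟩
  · have hn : (‖w‖ : ℂ) ≠ 0 := by simpa using h
    refine ⟨(‖w‖ : ℂ) / w, ?_, by field_simp⟩
    rw [norm_div, Complex.norm_real, norm_norm, div_self (by simpa using h)]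

/-- **Schwarz lemma on the polydisk.** If `f` is analytic on `𝔻^d` with
`sup_{𝔻^d} |f| ≤ 1`, then for every `λ ∈ 𝔻^d`,
`∑_{r=1}^d (1 - |λ^r|²) |∂f/∂λ^r(λ)| ≤ 1 - |f(λ)|²`. -/
theorem schwarz_lemma_polydisk {d : ℕ} (hd : 1 ≤ d) (f : (Fin d → ℂ) → ℂ)
    (hf : DifferentiableOn ℂ f (Polydisk d))
    (hb : ∀ lam ∈ Polydisk d, ‖f lam‖ ≤ 1)
    (lam : Fin d → ℂ) (hlam : lam ∈ Polydisk d) :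
    ∑ r : Fin d, (1 - ‖lam r‖ ^ 2) *
        ‖deriv (fun t : ℂ => f (Function.update lam r t)) (lam r)‖ ≤
      1 - ‖f lam‖ ^ 2 := by
  have hopen : IsOpen (Polydisk d) := by
    have : Polydisk d = ⋂ r, {l : Fin d → ℂ | ‖l r‖ < 1} := by
      ext l; simp [Polydisk]
    rw [this]
    exact isOpen_iInter_of_finite fun r => isOpen_lt (by fun_prop) (by fun_prop)
  have hfd : ∀ l ∈ Polydisk d, DifferentiableAt ℂ f l := fun l hl =>
    hf.differentiableAt (hopen.mem_nhds hl)
  have hpart : ∀ r, deriv (fun t : ℂ => f (Function.update lam r t)) (lam r)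
      = fderiv ℂ f lam (Pi.single r 1) := by
    intro r
    have h1 : HasDerivAt (Function.update lam r) (Pi.single r 1) (lam r) :=
      hasDerivAt_update lam r (lam r)
    have h2 : HasFDerivAt f (fderiv ℂ f lam) (Function.update lam r (lam r)) := by
      rw [Function.update_eq_self]; exact (hfd lam hlam).hasFDerivAt
    exact (h2.comp_hasDerivAt (lam r) h1).deriv
  choose c hc1 hc2 using fun r => aux_phase (fderiv ℂ f lam (Pi.single r 1))
  let φ : ℂ → Fin d → ℂ := fun z r => (c r * z + lam r) / (1 + (starRingEnd ℂ) (lam r) * (c r * z))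
  have hcz : ∀ z ∈ Metric.ball (0 : ℂ) 1, ∀ r, ‖c r * z‖ < 1 := by
    intro z hz r
    rw [norm_mul, hc1, one_mul]; simpa using hz
  have hφm : ∀ z ∈ Metric.ball (0 : ℂ) 1, φ z ∈ Polydisk d := fun z hz r =>
    (aux_mobius _ _ (hcz z hz r) (hlam r)).2
  have hφd : ∀ z ∈ Metric.ball (0 : ℂ) 1, HasDerivAt φ (fun r =>
      (((1 - ‖lam r‖ ^ 2 : ℝ) : ℂ) / (1 + (starRingEnd ℂ) (lam r) * (c r * z)) ^ 2) * c r) z := by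
    intro z hz
    rw [hasDerivAt_pi]
    intro r
    have h1 : HasDerivAt (fun z : ℂ => c r * z) (c r) z := by
      simpa using (hasDerivAt_id z).const_mul (c r)
    exact (aux_mobius_deriv (lam r) (c r * z) (aux_mobius _ _ (hcz z hz r) (hlam r)).1).comp z h1
  have hφ0 : φ 0 = lam := by ext r; simp [φ]
  have h0 : (0 : ℂ) ∈ Metric.ball (0 : ℂ) 1 := by simp
  have hP := aux_pick (f ∘ φ)
    (fun z hz => ((hfd _ (hφm z hz)).comp z (hφd z hz).differentiableAt).differentiableWithinAt)
    (fun z hz => hb _ (hφm z hz))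
  have hF : HasFDerivAt f (fderiv ℂ f lam) (φ 0) := by
    rw [hφ0]; exact (hfd lam hlam).hasFDerivAt
  rw [(hF.comp_hasDerivAt 0 (hφd 0 h0)).deriv, Function.comp_apply, hφ0] at hP
  have hval : fderiv ℂ f lam (fun r =>
      (((1 - ‖lam r‖ ^ 2 : ℝ) : ℂ) / (1 + (starRingEnd ℂ) (lam r) * (c r * 0)) ^ 2) * c r)
      = ((∑ r : Fin d, (1 - ‖lam r‖ ^ 2) * ‖fderiv ℂ f lam (Pi.single r 1)‖ : ℝ) : ℂ) := by
    rw [pi_eq_sum_univ' (fun r => (((1 - ‖lam r‖ ^ 2 : ℝ) : ℂ) /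
      (1 + (starRingEnd ℂ) (lam r) * (c r * 0)) ^ 2) * c r), map_sum]
    push_cast
    refine Finset.sum_congr rfl fun r _ => ?_
    rw [← hc2 r, map_smul, smul_eq_mul]
    have : (fun j => if j = r then (1 : ℂ) else 0) = Pi.single r 1 := by
      ext j; simp [Pi.single_apply]
    simp [this, mul_assoc]
  rw [hval, Complex.norm_real] at hP
  simp only [hpart]
  exact (le_abs_self _).trans hP
end
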